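/- arXiv:2006.01116 — 4 statements merged into one kernel-verified Lean document; each statement's English description precedes it below -/
import Mathlib

section
/- For every real ε > 0 there exists m₀ such that every digraph D with m ≥ m₀ arcs and minimum outdegree at least 4 admits a bipartition V(D) = V₁ ∪ V₂ with min{e(V₁,V₂), e(V₂,V₁)} ≥ (3/14 − ε)·m. -/
open Finset

/-- Number of arcs of the digraph `A` directed from a vertex of `S` to a vertex of `T`. -/
def dArcs {V : Type} [Fintype V] [DecidableEq V] (A : V → V → Prop) [DecidableRel A]
    (S T : Finset V) : ℕ :=
  ((S ×ˢ T).filter fun p => A p.1 p.2).card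

/-- Outdegree of `x`. -/
def outDeg {V : Type} [Fintype V] (A : V → V → Prop) [DecidableRel A] (x : V) : ℕ :=
  (Finset.univ.filter fun y => A x y).card

/-- Indegree of `x`. -/
def inDeg {V : Type} [Fintype V] (A : V → V → Prop) [DecidableRel A] (x : V) : ℕ :=
  (Finset.univ.filter fun y => A y x).card

/-- Degree of `x`: outdegree plus indegree. -/
def deg {V : Type} [Fintype V] (A : V → V → Prop) [DecidableRel A] (x : V) : ℕ :=
  outDeg A x + inDeg A x

/-- `s(x) = max{d⁺(x) − d⁻(x), d⁻(x) − d⁺(x)}`. -/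
def sVal {V : Type} [Fintype V] (A : V → V → Prop) [DecidableRel A] (x : V) : ℤ :=
  max ((outDeg A x : ℤ) - (inDeg A x : ℤ)) ((inDeg A x : ℤ) - (outDeg A x : ℤ))

/-- The gap `θ(X₁,X₂) = (e(X₁,Y)+e(Y,X₂)) − (e(X₂,Y)+e(Y,X₁))`. -/
def gap {V : Type} [Fintype V] [DecidableEq V] (A : V → V → Prop) [DecidableRel A]
    (X₁ X₂ Y : Finset V) : ℤ :=
  ((dArcs A X₁ Y : ℤ) + (dArcs A Y X₂ : ℤ)) - ((dArcs A X₂ Y : ℤ) + (dArcs A Y X₁ : ℤ))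

section Rounding

variable {V : Type} [DecidableEq V]

/-- Every vertex `v` follows the random bit of `c v`, positively if `c v = v` and negatively
otherwise; `sideProb c x v` is the probability that `v` lies in the first class when the bit of
`i` equals one with probability `x i`. -/
def sideProb (c : V → V) (x : V → ℝ) (v : V) : ℝ :=
  if c v = v then x (c v) else 1 - x (c v)

/-- The probability that `u` lies in the first class and `v` in the second one. -/
def crossProb (c : V → V) (x : V → ℝ) (u v : V) : ℝ :=
  if c u = c v then (if (c u = u ↔ c v = v) then 0 else sideProb c x u)
  else sideProb c x u * (1 - sideProb c x v)

lemma sideProb_mem {c : V → V} {x : V → ℝ} (hx : ∀ v, 0 ≤ x v ∧ x v ≤ 1) (v : V) :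
    0 ≤ sideProb c x v ∧ sideProb c x v ≤ 1 := by
  have := hx (c v)
  unfold sideProb
  split_ifs <;> constructor <;> linarith

lemma crossProb_mem {c : V → V} {x : V → ℝ} (hx : ∀ v, 0 ≤ x v ∧ x v ≤ 1) (u v : V) :
    0 ≤ crossProb c x u v ∧ crossProb c x u v ≤ 1 := by
  have hu := sideProb_mem (c := c) hx u
  have hv := sideProb_mem (c := c) hx v
  unfold crossProb
  split_ifs
  · norm_num
  · exact hu
  · constructor <;> nlinarith

lemma sideProb_update (c : V → V) (x : V → ℝ) (i : V) (t : ℝ) (v : V) :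
    sideProb c (Function.update x i t) v =
      (1 - t) * sideProb c (Function.update x i 0) v +
        t * sideProb c (Function.update x i 1) v := by
  unfold sideProb
  by_cases h : c v = i
  · simp only [h, Function.update_self]
    split_ifs <;> ring
  · simp only [Function.update_of_ne h]
    ring

lemma sideProb_update_of_ne {c : V → V} (x : V → ℝ) {i v : V} (h : c v ≠ i) (t : ℝ) :
    sideProb c (Function.update x i t) v = sideProb c x v := by
  unfold sideProb
  simp only [Function.update_of_ne h]

lemma crossProb_update (c : V → V) (x : V → ℝ) (i : V) (t : ℝ) (u v : V) :
    crossProb c (Function.update x i t) u v =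
      (1 - t) * crossProb c (Function.update x i 0) u v +
        t * crossProb c (Function.update x i 1) u v := by
  unfold crossProb
  by_cases h : c u = c v
  · simp only [h, if_true]
    split_ifs
    · ring
    · exact sideProb_update c x i t u
  · simp only [h, if_false]
    by_cases hu : c u = i
    · have hv : c v ≠ i := fun hv => h (hu.trans hv.symm)
      simp only [sideProb_update_of_ne x hv]
      rw [sideProb_update c x i t u]
      ring
    · simp only [sideProb_update_of_ne x hu]
      rw [sideProb_update c x i t v]
      ring

lemma crossProb_update_of_ne {c : V → V} (x : V → ℝ) {i u v : V} (hu : c u ≠ i) (hv : c v ≠ i)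
    (t : ℝ) : crossProb c (Function.update x i t) u v = crossProb c x u v := by
  unfold crossProb
  simp only [sideProb_update_of_ne x hu, sideProb_update_of_ne x hv]

lemma update_mem_unit {x : V → ℝ} (hx : ∀ v, 0 ≤ x v ∧ x v ≤ 1) (i : V) {t : ℝ}
    (ht : 0 ≤ t ∧ t ≤ 1) (v : V) :
    0 ≤ Function.update x i t v ∧ Function.update x i t v ≤ 1 := by
  by_cases h : v = i
  · subst h
    simpa using ht
  · simpa [Function.update_of_ne h] using hx v

/-- Derandomisation of the second moment method, one coordinate at a time. -/
lemma exists_rounding {X Y : (V → ℝ) → ℝ} {D : V → ℝ}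
    (hX : ∀ x i t, X (Function.update x i t) =
      (1 - t) * X (Function.update x i 0) + t * X (Function.update x i 1))
    (hY : ∀ x i t, Y (Function.update x i t) =
      (1 - t) * Y (Function.update x i 0) + t * Y (Function.update x i 1))
    (hXD : ∀ x, (∀ v, 0 ≤ x v ∧ x v ≤ 1) → ∀ i,
      |X (Function.update x i 1) - X (Function.update x i 0)| ≤ D i)
    (hYD : ∀ x, (∀ v, 0 ≤ x v ∧ x v ≤ 1) → ∀ i,
      |Y (Function.update x i 1) - Y (Function.update x i 0)| ≤ D i)
    (α β : ℝ) (s : Finset V) :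
    ∀ x : V → ℝ, (∀ v, 0 ≤ x v ∧ x v ≤ 1) → (∀ v, v ∉ s → x v = 0 ∨ x v = 1) →
      ∃ z : V → ℝ, (∀ v, z v = 0 ∨ z v = 1) ∧
        (X z - α) ^ 2 + (Y z - β) ^ 2 ≤
          (X x - α) ^ 2 + (Y x - β) ^ 2 + 2 * ∑ i ∈ s, D i ^ 2 := by
  induction s using Finset.induction_on with
  | empty =>
    intro x _ hx
    exact ⟨x, fun v => hx v (by simp), by simp⟩
  | insert i s hi ih =>
    intro x hx hs
    have key : ∃ t : ℝ, (t = 0 ∨ t = 1) ∧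
        (X (Function.update x i t) - α) ^ 2 + (Y (Function.update x i t) - β) ^ 2 ≤
          (X x - α) ^ 2 + (Y x - β) ^ 2 + 2 * D i ^ 2 := by
      have h1 := hX x i (x i)
      have h2 := hY x i (x i)
      rw [Function.update_eq_self] at h1 h2
      have h3 := sq_le_sq' (by linarith [(abs_le.1 (hXD x hx i)).1])
        (abs_le.1 (hXD x hx i)).2
      have h4 := sq_le_sq' (by linarith [(abs_le.1 (hYD x hx i)).1])
        (abs_le.1 (hYD x hx i)).2
      obtain ⟨t0, t1⟩ := hx i
      by_contra! hcon
      have c0 := hcon 0 (Or.inl rfl)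
      have c1 := hcon 1 (Or.inr rfl)
      set p0 := X (Function.update x i 0)
      set p1 := X (Function.update x i 1)
      set q0 := Y (Function.update x i 0)
      set q1 := Y (Function.update x i 1)
      have e1 : (X x - α) ^ 2 + x i * (1 - x i) * (p1 - p0) ^ 2 =
          (1 - x i) * (p0 - α) ^ 2 + x i * (p1 - α) ^ 2 := by
        rw [h1]
        ring
      have e2 : (Y x - β) ^ 2 + x i * (1 - x i) * (q1 - q0) ^ 2 =
          (1 - x i) * (q0 - β) ^ 2 + x i * (q1 - β) ^ 2 := by
        rw [h2]
        ring
      have ht : 0 ≤ x i * (1 - x i) := mul_nonneg t0 (by linarith)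
      have ht' : x i * (1 - x i) ≤ 1 := by nlinarith
      have f1 : x i * (1 - x i) * (p1 - p0) ^ 2 ≤ D i ^ 2 := by nlinarith [sq_nonneg (p1 - p0)]
      have f2 : x i * (1 - x i) * (q1 - q0) ^ 2 ≤ D i ^ 2 := by nlinarith [sq_nonneg (q1 - q0)]
      rcases t0.eq_or_lt with h | h
      · rw [← h] at e1 e2 f1 f2
        nlinarith
      · nlinarith [mul_lt_mul_of_pos_left c1 h,
          mul_le_mul_of_nonneg_left c0.le (sub_nonneg.2 t1)]
    obtain ⟨t, ht, hle⟩ := key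
    have ht' : 0 ≤ t ∧ t ≤ 1 := by rcases ht with rfl | rfl <;> norm_num
    obtain ⟨z, hz, hzle⟩ := ih (Function.update x i t) (update_mem_unit hx i ht') (by
      intro v hv
      by_cases h : v = i
      · subst h
        simpa using ht
      · rw [Function.update_of_ne h]
        exact hs v (by simp [h, hv]))
    refine ⟨z, hz, ?_⟩
    rw [Finset.sum_insert hi]
    linarith

variable [Fintype V]

/-- The expected weight of the arcs from the first class to the second one. -/
def expCut (a : V → V → ℝ) (c : V → V) (x : V → ℝ) : ℝ :=
  ∑ u, ∑ v, a u v * crossProb c x u v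

/-- The weight of the arcs meeting the block of `i`. -/
def blockWeight (a : V → V → ℝ) (c : V → V) (i : V) : ℝ :=
  ∑ u, ∑ v, a u v * ((if c u = i then 1 else 0) + (if c v = i then 1 else 0))

lemma expCut_update (a : V → V → ℝ) (c : V → V) (x : V → ℝ) (i : V) (t : ℝ) :
    expCut a c (Function.update x i t) =
      (1 - t) * expCut a c (Function.update x i 0) +
        t * expCut a c (Function.update x i 1) := by
  unfold expCut
  simp only [Finset.mul_sum, ← Finset.sum_add_distrib]
  refine Finset.sum_congr rfl fun u _ => Finset.sum_congr rfl fun v _ => ?_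
  rw [crossProb_update]
  ring

lemma abs_expCut_sub_le {a : V → V → ℝ} (ha : ∀ u v, 0 ≤ a u v) (c : V → V) {x : V → ℝ}
    (hx : ∀ v, 0 ≤ x v ∧ x v ≤ 1) (i : V) :
    |expCut a c (Function.update x i 1) - expCut a c (Function.update x i 0)| ≤
      blockWeight a c i := by
  unfold expCut blockWeight
  rw [← Finset.sum_sub_distrib]
  refine (Finset.abs_sum_le_sum_abs _ _).trans (Finset.sum_le_sum fun u _ => ?_)
  rw [← Finset.sum_sub_distrib]
  refine (Finset.abs_sum_le_sum_abs _ _).trans (Finset.sum_le_sum fun v _ => ?_)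
  rw [← mul_sub, abs_mul, abs_of_nonneg (ha u v)]
  refine mul_le_mul_of_nonneg_left ?_ (ha u v)
  by_cases h : c u ≠ i ∧ c v ≠ i
  · simp [crossProb_update_of_ne x h.1 h.2, h.1, h.2]
  · have h1 := crossProb_mem (c := c) (update_mem_unit hx i (t := 1) (by norm_num)) u v
    have h0 := crossProb_mem (c := c) (update_mem_unit hx i (t := 0) (by norm_num)) u v
    have : |crossProb c (Function.update x i 1) u v - crossProb c (Function.update x i 0) u v|
        ≤ 1 := by
      rw [abs_le]
      constructor <;> linarith
    refine this.trans ?_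
    rw [not_and_or, not_not, not_not] at h
    rcases h with h | h
    · rw [if_pos h]
      split_ifs <;> norm_num
    · rw [if_pos h]
      split_ifs <;> norm_num

/-- The weight of the arcs leaving `S`. -/
def cutWeight (a : V → V → ℝ) (S : Finset V) : ℝ := ∑ u ∈ S, ∑ v ∈ Sᶜ, a u v

lemma expCut_eq_cutWeight (a : V → V → ℝ) (c : V → V) {z : V → ℝ}
    (hz : ∀ v, z v = 0 ∨ z v = 1) :
    expCut a c z = cutWeight a (univ.filter fun v => sideProb c z v = 1) := by
  have hp : ∀ v, sideProb c z v = 0 ∨ sideProb c z v = 1 := by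
    intro v
    unfold sideProb
    rcases hz (c v) with h | h <;> rw [h] <;> split_ifs <;> norm_num
  unfold expCut cutWeight
  rw [Finset.sum_filter]
  refine Finset.sum_congr rfl fun u _ => ?_
  have hc : (univ.filter fun v => sideProb c z v = 1)ᶜ =
      univ.filter fun v => ¬ sideProb c z v = 1 := by
    ext v
    simp
  rw [hc, Finset.sum_filter]
  split_ifs with h1
  · refine Finset.sum_congr rfl fun v _ => ?_
    unfold crossProb
    rw [h1]
    by_cases h : c u = c v
    · rw [if_pos h]
      have hv : sideProb c z v = if (c u = u ↔ c v = v) then 1 else 0 := by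
        unfold sideProb at h1 ⊢
        rw [h] at h1
        rw [h]
        by_cases ha : c v = u <;> by_cases hb : c v = v <;> simp_all
      rw [hv]
      split_ifs <;> simp_all
    · rw [if_neg h]
      rcases hp v with h2 | h2 <;> rw [h2] <;> norm_num
  · refine Finset.sum_eq_zero fun v _ => ?_
    have h0 : sideProb c z u = 0 := (hp u).resolve_right h1
    unfold crossProb
    rw [h0]
    simp

lemma blockWeight_swap (a : V → V → ℝ) (c : V → V) (i : V) :
    blockWeight (fun u v => a v u) c i = blockWeight a c i := by
  unfold blockWeight
  rw [Finset.sum_comm]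
  simp only [add_comm]

lemma blockWeight_nonneg {a : V → V → ℝ} (ha : ∀ u v, 0 ≤ a u v) (c : V → V) (i : V) :
    0 ≤ blockWeight a c i := by
  unfold blockWeight
  refine Finset.sum_nonneg fun u _ => Finset.sum_nonneg fun v _ => mul_nonneg (ha u v) ?_
  split_ifs <;> norm_num

lemma sum_blockWeight (a : V → V → ℝ) (c : V → V) :
    ∑ i, blockWeight a c i = 2 * ∑ u, ∑ v, a u v := by
  unfold blockWeight
  rw [Finset.sum_comm, Finset.mul_sum]
  refine Finset.sum_congr rfl fun u _ => ?_
  rw [Finset.sum_comm, Finset.mul_sum]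
  refine Finset.sum_congr rfl fun v _ => ?_
  rw [← Finset.mul_sum, Finset.sum_add_distrib]
  simp
  ring

/-- If all blocks have small weight, some cut has weight close to the expectation in both
directions. -/
theorem exists_cut_near_expCut {a : V → V → ℝ} (ha : ∀ u v, 0 ≤ a u v) (c : V → V)
    (B : Finset V) {x : V → ℝ} (hx : ∀ v, 0 ≤ x v ∧ x v ≤ 1)
    (hxB : ∀ v, v ∉ B → x v = 0 ∨ x v = 1) {Δ : ℝ} (hΔ : ∀ i ∈ B, blockWeight a c i ≤ Δ)
    (hΔ0 : 0 ≤ Δ) {η : ℝ} (hη : 0 ≤ η) (hηΔ : 4 * Δ * ∑ u, ∑ v, a u v ≤ η ^ 2) :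
    ∃ S : Finset V, expCut a c x - η ≤ cutWeight a S ∧
      expCut (fun u v => a v u) c x - η ≤ cutWeight (fun u v => a v u) S := by
  obtain ⟨z, hz, hle⟩ := exists_rounding (X := expCut a c) (Y := expCut (fun u v => a v u) c)
    (D := blockWeight a c) (expCut_update a c) (expCut_update _ c)
    (fun x hx i => abs_expCut_sub_le ha c hx i)
    (fun x hx i => by
      rw [← blockWeight_swap]
      exact abs_expCut_sub_le (fun u v => ha v u) c hx i)
    (expCut a c x) (expCut (fun u v => a v u) c x) B x hx hxB
  have hsum : ∑ i ∈ B, blockWeight a c i ^ 2 ≤ Δ * (2 * ∑ u, ∑ v, a u v) := by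
    rw [← sum_blockWeight a c, Finset.mul_sum]
    refine (Finset.sum_le_sum fun i hi => ?_).trans
      (Finset.sum_le_sum_of_subset_of_nonneg (Finset.subset_univ B) fun i _ _ =>
        mul_nonneg hΔ0 (blockWeight_nonneg ha c i))
    rw [sq]
    exact mul_le_mul_of_nonneg_right (hΔ i hi) (blockWeight_nonneg ha c i)
  rw [expCut_eq_cutWeight a c hz, expCut_eq_cutWeight _ c hz] at hle
  set S := univ.filter fun v => sideProb c z v = 1
  refine ⟨S, ?_, ?_⟩
  · have := abs_le_of_sq_le_sq (a := cutWeight a S - expCut a c x) (b := η)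
      (by nlinarith [sq_nonneg (cutWeight (fun u v => a v u) S -
        expCut (fun u v => a v u) c x)]) hη
    linarith [(abs_le.1 this).1]
  · have := abs_le_of_sq_le_sq
      (a := cutWeight (fun u v => a v u) S - expCut (fun u v => a v u) c x) (b := η)
      (by nlinarith [sq_nonneg (cutWeight a S - expCut a c x)]) hη
    linarith [(abs_le.1 this).1]

end Rounding

section Stars

variable {V : Type}

/-- `u` and `v` are linked by an arc in at least one direction. -/
def Linked (E : V → V → Prop) (u v : V) : Prop := E u v ∨ E v u

lemma Linked.symm {E : V → V → Prop} {u v : V} (h : Linked E u v) : Linked E v u := Or.symm h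

/-- The number of arcs between `u` and `v`. -/
def arcCount (E : V → V → Prop) [DecidableRel E] (u v : V) : ℕ :=
  (if E u v then 1 else 0) + (if E v u then 1 else 0)

lemma arcCount_comm (E : V → V → Prop) [DecidableRel E] (u v : V) :
    arcCount E u v = arcCount E v u := add_comm _ _

lemma Linked.one_le_arcCount {E : V → V → Prop} [DecidableRel E] {u v : V}
    (h : Linked E u v) : 1 ≤ arcCount E u v := by
  unfold arcCount
  rcases h with h | h <;> simp [h]

lemma arcCount_eq_zero {E : V → V → Prop} [DecidableRel E] {u v : V}
    (h : ¬ Linked E u v) : arcCount E u v = 0 := by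
  unfold Linked at h
  push Not at h
  simp [arcCount, h]

lemma arcCount_self {E : V → V → Prop} [DecidableRel E] (hE : ∀ v, ¬ E v v) (v : V) :
    arcCount E v v = 0 := by
  simp [arcCount, hE]

/-- A matching of the underlying graph of `E`, written as an involution whose fixed points are
the unmatched vertices. -/
structure IsPairing (E : V → V → Prop) (σ : V → V) : Prop where
  invol : ∀ v, σ (σ v) = v
  linked : ∀ v, σ v ≠ v → Linked E v (σ v)

/-- An unmatched vertex linked to exactly one end of some matching edge. -/
def IsGood (E : V → V → Prop) (σ : V → V) (v : V) : Prop :=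
  σ v = v ∧ ∃ u, Linked E v u ∧ ¬ Linked E v (σ u)

/-- An unmatched vertex linked to both or none of the ends of every matching edge. -/
def IsBad (E : V → V → Prop) (σ : V → V) (v : V) : Prop :=
  σ v = v ∧ ∀ u, Linked E v u → Linked E v (σ u)

lemma isBad_of_not_isGood {E : V → V → Prop} {σ : V → V} {v : V} (hv : σ v = v)
    (h : ¬ IsGood E σ v) : IsBad E σ v := by
  refine ⟨hv, fun u hu => ?_⟩
  by_contra hc
  exact h ⟨hv, u, hu, hc⟩

lemma IsBad.not_isGood {E : V → V → Prop} {σ : V → V} {v : V} (h : IsBad E σ v) :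
    ¬ IsGood E σ v := by
  rintro ⟨-, u, hu, hn⟩
  exact hn (h.2 u hu)

lemma IsPairing.partner_ne {E : V → V → Prop} {σ : V → V} (hσ : IsPairing E σ) {u v : V}
    (hu : σ u ≠ u) (hv : σ v = v) : σ u ≠ v := by
  intro h
  have h' := hσ.invol u
  rw [h, hv] at h'
  exact hu (h.trans h')

/-- The outdegree truncated at three. -/
def outTrunc [Fintype V] (E : V → V → Prop) [DecidableRel E] (v : V) : ℕ :=
  min (univ.filter fun u => E v u).card 3

/-- The surplus of a matched vertex. -/
def surplus [Fintype V] (E : V → V → Prop) [DecidableRel E] (σ : V → V) (v : V) : ℤ :=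
  7 * arcCount E v (σ v) - 2 * outTrunc E v

lemma IsPairing.one_le_surplus [Fintype V] {E : V → V → Prop} [DecidableRel E] {σ : V → V}
    (hσ : IsPairing E σ)
    {v : V} (hv : σ v ≠ v) : 1 ≤ surplus E σ v := by
  have h1 := (hσ.linked v hv).one_le_arcCount
  have h2 : outTrunc E v ≤ 3 := min_le_right _ _
  unfold surplus
  omega

open Classical in
/-- The set of good vertices. -/
noncomputable def goodSet [Fintype V] (E : V → V → Prop) (σ : V → V) : Finset V :=
  univ.filter fun v => IsGood E σ v

lemma mem_goodSet [Fintype V] {E : V → V → Prop} {σ : V → V} {v : V} :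
    v ∈ goodSet E σ ↔ IsGood E σ v := by
  simp [goodSet]

variable [DecidableEq V]

/-- The matching in which `u` and `v` exchange their roles. -/
def roleSwap (σ : V → V) (u v : V) (x : V) : V :=
  Equiv.swap u v (σ (Equiv.swap u v x))

lemma roleSwap_left {σ : V → V} {u v : V} (hv : σ v = v) : roleSwap σ u v u = u := by
  simp [roleSwap, hv]

lemma roleSwap_right {σ : V → V} {u v : V} (hu : σ u ≠ u) (huv : σ u ≠ v) :
    roleSwap σ u v v = σ u := by
  simp [roleSwap, Equiv.swap_apply_of_ne_of_ne hu huv]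

lemma roleSwap_partner {σ : V → V} {u v : V} (hσ : ∀ v, σ (σ v) = v) (hu : σ u ≠ u)
    (huv : σ u ≠ v) : roleSwap σ u v (σ u) = v := by
  simp [roleSwap, Equiv.swap_apply_of_ne_of_ne hu huv, hσ]

lemma roleSwap_of_ne {σ : V → V} {u v x : V} (hσ : ∀ v, σ (σ v) = v) (hv : σ v = v)
    (hxu : x ≠ u) (hxv : x ≠ v) (hx : x ≠ σ u) : roleSwap σ u v x = σ x := by
  have h1 : σ x ≠ u := fun h => hx (by rw [← h, hσ])
  have h2 : σ x ≠ v := fun h => hxv (by rw [← hσ x, h, hv])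
  simp [roleSwap, Equiv.swap_apply_of_ne_of_ne hxu hxv, Equiv.swap_apply_of_ne_of_ne h1 h2]

variable {E : V → V → Prop}

lemma IsPairing.exchange {σ : V → V} (hσ : IsPairing E σ) {u v : V} (hu : σ u ≠ u)
    (hv : σ v = v) (h : Linked E v (σ u)) : IsPairing E (roleSwap σ u v) := by
  have huv : σ u ≠ v := hσ.partner_ne hu hv
  constructor
  · intro x
    simp [roleSwap, hσ.invol]
  · intro x hx
    by_cases hxu : x = u
    · rw [hxu, roleSwap_left hv] at hx
      exact absurd rfl hx
    by_cases hxv : x = v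
    · rw [hxv, roleSwap_right hu huv]
      exact h
    by_cases hxw : x = σ u
    · rw [hxw, roleSwap_partner hσ.invol hu huv]
      exact h.symm
    · rw [roleSwap_of_ne hσ.invol hv hxu hxv hxw] at hx ⊢
      exact hσ.linked x hx

variable [Fintype V]

/-- The set of matched vertices. -/
def matched (σ : V → V) : Finset V := univ.filter fun v => σ v ≠ v

lemma mem_matched {σ : V → V} {v : V} : v ∈ matched σ ↔ σ v ≠ v := by simp [matched]

lemma card_matched_exchange (σ : V → V) (u v : V) :
    (matched (roleSwap σ u v)).card = (matched σ).card := by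
  refine Finset.card_bij (fun x _ => Equiv.swap u v x) ?_ ?_ ?_
  · intro x hx
    rw [mem_matched] at hx ⊢
    intro h
    apply hx
    simp [roleSwap, h]
  · intro x _ y _ h
    exact (Equiv.swap u v).injective h
  · intro x hx
    refine ⟨Equiv.swap u v x, ?_, by simp⟩
    rw [mem_matched] at hx ⊢
    simpa [roleSwap] using hx

/-- A matching with the largest number of edges. -/
structure IsMaxPairing (E : V → V → Prop) (σ : V → V) : Prop extends IsPairing E σ where
  card_le : ∀ τ, IsPairing E τ → (matched τ).card ≤ (matched σ).card

lemma IsMaxPairing.exchange {σ : V → V} (hσ : IsMaxPairing E σ) {u v : V} (hu : σ u ≠ u)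
    (hv : σ v = v) (h : Linked E v (σ u)) : IsMaxPairing E (roleSwap σ u v) where
  toIsPairing := hσ.toIsPairing.exchange hu hv h
  card_le τ hτ := by
    rw [card_matched_exchange]
    exact hσ.card_le τ hτ

lemma IsMaxPairing.not_linked {σ : V → V} (hσ : IsMaxPairing E σ) {u v : V} (huv : u ≠ v)
    (hu : σ u = u) (hv : σ v = v) : ¬ Linked E u v := by
  intro h
  have hval : ∀ x, x ≠ u → x ≠ v → σ x ≠ u ∧ σ x ≠ v := by
    intro x hxu hxv
    constructor
    · intro h'
      exact hxu (by rw [← hσ.invol x, h', hu])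
    · intro h'
      exact hxv (by rw [← hσ.invol x, h', hv])
  let τ : V → V := fun x => if x = u then v else if x = v then u else σ x
  have hτ : IsPairing E τ := by
    constructor
    · intro x
      by_cases hxu : x = u
      · simp [τ, hxu, huv.symm]
      by_cases hxv : x = v
      · simp [τ, hxv, huv.symm]
      · simp [τ, hxu, hxv, hval x hxu hxv, hσ.invol]
    · intro x hx
      by_cases hxu : x = u
      · simpa [τ, hxu] using h
      by_cases hxv : x = v
      · simpa [τ, hxv, huv.symm] using h.symm
      · simp only [τ, hxu, hxv, if_false] at hx ⊢
        exact hσ.linked x hx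
  have hsub : matched σ ⊂ matched τ := by
    rw [Finset.ssubset_iff_of_subset]
    · refine ⟨u, ?_, ?_⟩
      · simp [mem_matched, τ, huv.symm]
      · simp [mem_matched, hu]
    · intro x hx
      rw [mem_matched] at hx ⊢
      have hxu : x ≠ u := fun h => hx (h ▸ hu)
      have hxv : x ≠ v := fun h => hx (h ▸ hv)
      simpa [τ, hxu, hxv] using hx
  exact (Finset.card_lt_card hsub).not_ge (hσ.card_le τ hτ)

lemma IsMaxPairing.ne_of_linked (hE : ∀ v, ¬ E v v) {σ : V → V} (hσ : IsMaxPairing E σ)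
    {u v : V} (hv : σ v = v) (h : Linked E v u) : σ u ≠ u := by
  intro hu
  by_cases huv : v = u
  · subst huv
    exact h.elim (hE _) (hE _)
  · exact hσ.not_linked huv hv hu h

lemma IsMaxPairing.not_linked_partner (hE : ∀ v, ¬ E v v) {σ : V → V}
    (hσ : IsMaxPairing E σ) {u v v' : V} (hne : v ≠ v') (hv : σ v = v) (hv' : σ v' = v')
    (h : Linked E v u) : ¬ Linked E v' (σ u) := by
  intro h'
  have hu := hσ.ne_of_linked hE hv h
  have hu' : σ (σ u) ≠ σ u := by
    rw [hσ.invol]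
    exact hu.symm
  have hτ := hσ.exchange (u := σ u) (v := v) hu' hv (by rwa [hσ.invol])
  have h1 : σ u ≠ v' := fun h => hu' (by rw [h, hv'])
  have h2 : v' ≠ u := fun h => hu (by rw [← h, hv'])
  refine hτ.not_linked h1.symm ?_ (roleSwap_left hv) h'
  rw [roleSwap_of_ne hσ.invol hv h1.symm hne.symm (by rwa [hσ.invol]), hv']

/-- A maximum matching with the largest number of good vertices. -/
structure IsRichPairing (E : V → V → Prop) (σ : V → V) : Prop extends IsMaxPairing E σ where
  good_le : ∀ τ, IsMaxPairing E τ → (goodSet E τ).card ≤ (goodSet E σ).card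

section Rich

variable (hE : ∀ v, ¬ E v v) {σ : V → V} (hσ : IsRichPairing E σ) {u v : V}
  (hv : IsBad E σ v) (h : Linked E v u)

include hE hσ hv h

lemma IsRichPairing.goodSet_subset_exchange : goodSet E σ ⊆ goodSet E (roleSwap σ u v) := by
  have hu := hσ.ne_of_linked hE hv.1 h
  have hw := hv.2 u h
  have huv : σ u ≠ v := hσ.partner_ne hu hv.1
  intro x hx
  rw [mem_goodSet] at hx ⊢
  obtain ⟨hxσ, y, hy, hny⟩ := hx
  have hxv : x ≠ v := by
    rintro rfl
    exact hny (hv.2 y hy)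
  have hxu : x ≠ u := fun h' => hu (by rw [← h', hxσ])
  have hxw : x ≠ σ u := (hσ.partner_ne hu hxσ).symm
  refine ⟨by rw [roleSwap_of_ne hσ.invol hv.1 hxu hxv hxw, hxσ], y, hy, ?_⟩
  have hyv : y ≠ v := by
    rintro rfl
    exact hσ.not_linked hxv hxσ hv.1 hy
  have hyu : y ≠ u := by
    rintro rfl
    exact hσ.not_linked_partner hE hxv hxσ hv.1 hy hw
  have hyw : y ≠ σ u := by
    rintro rfl
    exact hσ.not_linked_partner hE hxv.symm hv.1 hxσ h hy
  rwa [roleSwap_of_ne hσ.invol hv.1 hyu hyv hyw]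

lemma IsRichPairing.exchange : IsRichPairing E (roleSwap σ u v) where
  toIsMaxPairing := hσ.toIsMaxPairing.exchange (hσ.ne_of_linked hE hv.1 h) hv.1 (hv.2 u h)
  good_le τ hτ := (hσ.good_le τ hτ).trans
    (Finset.card_le_card (hσ.goodSet_subset_exchange hE hv h))

lemma IsRichPairing.goodSet_exchange : goodSet E (roleSwap σ u v) = goodSet E σ :=
  (Finset.eq_of_subset_of_card_le (hσ.goodSet_subset_exchange hE hv h)
    (hσ.good_le _ (hσ.exchange hE hv h).toIsMaxPairing)).symm

lemma IsRichPairing.isBad_exchange : IsBad E (roleSwap σ u v) u := by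
  refine isBad_of_not_isGood (roleSwap_left hv.1) ?_
  rw [← mem_goodSet, hσ.goodSet_exchange hE hv h, mem_goodSet]
  exact fun hu => hσ.ne_of_linked hE hv.1 h hu.1

lemma IsRichPairing.isBad_exchange_of_ne {v' : V} (hv' : IsBad E σ v') (hne : v' ≠ v) :
    IsBad E (roleSwap σ u v) v' := by
  have hu := hσ.ne_of_linked hE hv.1 h
  refine isBad_of_not_isGood ?_ ?_
  · rw [roleSwap_of_ne hσ.invol hv.1 (fun h' => hu (by rw [← h', hv'.1])) hne
      (hσ.partner_ne hu hv'.1).symm, hv'.1]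
  · rw [← mem_goodSet, hσ.goodSet_exchange hE hv h, mem_goodSet]
    exact hv'.not_isGood

end Rich

/-- `x` belongs to the part of the matching that may pay for the bad vertex `v`. -/
def Pays (E : V → V → Prop) (σ : V → V) (v x : V) : Prop :=
  Linked E v x ∨ ∃ u z, Linked E v u ∧ Linked E u z ∧ ¬ Linked E v z ∧ z ≠ v ∧ (x = z ∨ x = σ z)

lemma IsRichPairing.not_linked_of_linked (hE : ∀ v, ¬ E v v) {σ : V → V}
    (hσ : IsRichPairing E σ) {v v' u z : V} (hv : IsBad E σ v) (hv' : IsBad E σ v')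
    (hne : v ≠ v') (hu : Linked E v u) (hz : Linked E u z) : ¬ Linked E v' z := by
  intro h
  have huv' : u ≠ v' := by
    rintro rfl
    exact hσ.not_linked hne hv.1 hv'.1 hu
  have hb := hσ.isBad_exchange hE hv hu
  have hb' := hσ.isBad_exchange_of_ne hE hv hu hv' hne.symm
  exact (hσ.exchange hE hv hu).not_linked_partner hE huv' hb.1 hb'.1 hz (hb'.2 z h)

lemma IsRichPairing.not_pays_pays (hE : ∀ v, ¬ E v v) {σ : V → V} (hσ : IsRichPairing E σ)
    {v v' x : V} (hv : IsBad E σ v) (hv' : IsBad E σ v') (hne : v ≠ v') (h : Pays E σ v x) :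
    ¬ Pays E σ v' x := by
  intro h'
  rcases h with h | ⟨u, z, hu, hz, hnz, hzv, hx⟩
  · rcases h' with h' | ⟨u', z', hu', hz', hnz', hzv', hx'⟩
    · exact hσ.not_linked_partner hE hne hv.1 hv'.1 h (hv'.2 x h')
    · refine hσ.not_linked_of_linked hE hv' hv hne.symm hu' hz' ?_
      rcases hx' with rfl | rfl
      · exact h
      · have := hv.2 _ h
        rwa [hσ.invol] at this
  · rcases h' with h' | ⟨u', z', hu', hz', hnz', hzv', hx'⟩
    · refine hσ.not_linked_of_linked hE hv hv' hne hu hz ?_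
      rcases hx with rfl | rfl
      · exact h'
      · have := hv'.2 _ h'
        rwa [hσ.invol] at this
    · have hzz : z' = z ∨ z' = σ z := by
        rcases hx with rfl | rfl <;> rcases hx' with h1 | h1
        · exact Or.inl h1.symm
        · exact Or.inr (by rw [h1, hσ.invol])
        · exact Or.inr h1.symm
        · exact Or.inl (by rw [← hσ.invol z', ← h1, hσ.invol])
      have hnz1 := hσ.not_linked_of_linked hE hv hv' hne hu hz
      have hzv1 : z ≠ v' := by
        rintro rfl
        exact hσ.not_linked_partner hE hne.symm hv'.1 hv.1 hz.symm (hv.2 u hu)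
      have ne1 : ∀ y, y = v ∨ Linked E v y → y ≠ v' ∧ ¬ Linked E v' y := by
        intro y hy
        rcases hy with rfl | hy
        · exact ⟨hne, hσ.not_linked hne.symm hv'.1 hv.1⟩
        · refine ⟨?_, fun h' => hσ.not_linked_partner hE hne hv.1 hv'.1 hy (hv'.2 y h')⟩
          rintro rfl
          exact hσ.not_linked hne hv.1 hv'.1 hy
      have hb := hσ.isBad_exchange hE hv hu
      have hb' := hσ.isBad_exchange_of_ne hE hv hu hv' hne.symm
      have hτ := hσ.exchange hE hv hu
      set τ := roleSwap σ u v with hτdef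
      have hu'u : u' ≠ u := by
        rintro rfl
        exact (ne1 u' (Or.inr hu)).2 hu'
      have hρ := hτ.exchange hE hb' hu'
      have hbu' := hτ.isBad_exchange hE hb' hu'
      have hbu := hτ.isBad_exchange_of_ne hE hb' hu' hb (ne1 u (Or.inr hu)).1
      have hτu' : τ u' = σ u' := by
        refine roleSwap_of_ne hσ.invol hv.1 hu'u ?_ ?_
        · rintro rfl
          exact (ne1 u' (Or.inl rfl)).2 hu'
        · rintro rfl
          exact (ne1 (σ u) (Or.inr (hv.2 u hu))).2 hu'
      have hτz : τ z = σ z := by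
        refine roleSwap_of_ne hσ.invol hv.1 ?_ hzv ?_
        · rintro rfl
          exact hnz hu
        · rintro rfl
          exact hnz (hv.2 u hu)
      have hρz : roleSwap τ u' v' z = σ z := by
        rw [roleSwap_of_ne hτ.invol hb'.1 ?_ hzv1 ?_, hτz]
        · rintro rfl
          exact hnz1 hu'
        · rw [hτu']
          rintro rfl
          exact hnz1 (hv'.2 u' hu')
      have hfin := hρ.not_linked_partner hE hu'u.symm hbu.1 hbu'.1 hz
      rw [hρz] at hfin
      rcases hzz with rfl | rfl
      · have := hbu'.2 _ hz'
        rw [hρz] at this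
        exact hfin this
      · exact hfin hz'

variable [DecidableRel E]

/-- Twice the number of arcs between matched partners. -/
def pairWeight (E : V → V → Prop) [DecidableRel E] (σ : V → V) : ℕ :=
  ∑ v, arcCount E v (σ v)

/-- A maximum matching with the largest number of good vertices and, subject to this, the
largest number of arcs between matched partners. -/
structure IsBestPairing (E : V → V → Prop) [DecidableRel E] (σ : V → V) : Prop
    extends IsRichPairing E σ where
  weight_le : ∀ τ, IsRichPairing E τ → pairWeight E τ ≤ pairWeight E σ

lemma exists_isBestPairing (E : V → V → Prop) [DecidableRel E] :
    ∃ σ : V → V, IsBestPairing E σ := by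
  classical
  obtain ⟨σ₁, h₁, m₁⟩ := Finset.exists_max_image (univ.filter fun σ : V → V => IsPairing E σ)
    (fun σ => (matched σ).card) ⟨id, by simp; exact ⟨fun v => rfl, fun v h => absurd rfl h⟩⟩
  simp only [mem_filter, mem_univ, true_and] at h₁ m₁
  obtain ⟨σ₂, h₂, m₂⟩ := Finset.exists_max_image
    (univ.filter fun σ : V → V => IsMaxPairing E σ) (fun σ => (goodSet E σ).card)
    ⟨σ₁, by simpa using ⟨h₁, m₁⟩⟩
  simp only [mem_filter, mem_univ, true_and] at h₂ m₂
  obtain ⟨σ₃, h₃, m₃⟩ := Finset.exists_max_image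
    (univ.filter fun σ : V → V => IsRichPairing E σ) (fun σ => pairWeight E σ)
    ⟨σ₂, by simpa using ⟨h₂, m₂⟩⟩
  simp only [mem_filter, mem_univ, true_and] at h₃ m₃
  exact ⟨σ₃, h₃, m₃⟩

lemma pairWeight_roleSwap (hE : ∀ v, ¬ E v v) {σ : V → V} (hσ : IsPairing E σ) {u v : V}
    (hu : σ u ≠ u) (hv : σ v = v) :
    pairWeight E (roleSwap σ u v) + 2 * arcCount E u (σ u) =
      pairWeight E σ + 2 * arcCount E v (σ u) := by
  have huv : σ u ≠ v := hσ.partner_ne hu hv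
  have huv' : u ≠ v := fun h => hu (by rw [h, hv])
  unfold pairWeight
  have hs : ∀ f : V → ℕ, ∑ x, f x =
      f u + (f v + (f (σ u) + ∑ x ∈ univ \ {u, v, σ u}, f x)) := by
    intro f
    rw [← Finset.sum_sdiff (Finset.subset_univ {u, v, σ u}), add_comm,
      Finset.sum_insert (by simp [huv', hu.symm]), Finset.sum_insert (by simp [huv.symm]),
      Finset.sum_singleton]
    ring
  rw [hs, hs (fun x => arcCount E x (σ x)), roleSwap_left hv, roleSwap_right hu huv,
    roleSwap_partner hσ.invol hu huv, hσ.invol, hv, arcCount_self hE, arcCount_self hE,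
    arcCount_comm E (σ u) v, arcCount_comm E (σ u) u]
  have : ∑ x ∈ univ \ {u, v, σ u}, arcCount E x (roleSwap σ u v x) =
      ∑ x ∈ univ \ {u, v, σ u}, arcCount E x (σ x) := by
    refine Finset.sum_congr rfl fun x hx => ?_
    simp only [mem_sdiff, mem_univ, true_and, mem_insert, mem_singleton, not_or] at hx
    rw [roleSwap_of_ne hσ.invol hv hx.1 hx.2.1 hx.2.2]
  rw [this]
  ring

lemma IsBestPairing.arcCount_le (hE : ∀ v, ¬ E v v) {σ : V → V} (hσ : IsBestPairing E σ)
    {u v : V} (hv : IsBad E σ v) (h : Linked E v u) :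
    arcCount E v u ≤ arcCount E u (σ u) := by
  have hu := hσ.ne_of_linked hE hv.1 (hv.2 u h)
  have := pairWeight_roleSwap hE hσ.toIsPairing hu hv.1
  have hle := hσ.weight_le _ (hσ.toIsRichPairing.exchange hE hv (hv.2 u h))
  rw [hσ.invol, arcCount_comm E (σ u) u] at this
  omega

lemma IsBestPairing.exchange (hE : ∀ v, ¬ E v v) {σ : V → V} (hσ : IsBestPairing E σ)
    {u v : V} (hv : IsBad E σ v) (h : Linked E v u) (hw : arcCount E u (σ u) = 1) :
    IsBestPairing E (roleSwap σ u v) where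
  toIsRichPairing := hσ.toIsRichPairing.exchange hE hv h
  weight_le τ hτ := by
    have hu := hσ.ne_of_linked hE hv.1 h
    have h1 := pairWeight_roleSwap hE hσ.toIsPairing hu hv.1
    have h2 := (hv.2 u h).one_le_arcCount
    have h3 := hσ.weight_le τ hτ
    omega

/-- If all pairs met by the neighbourhood of a bad vertex `v` are joined by single arcs, then
there are no antiparallel arcs within the closed neighbourhood of `v`. -/
lemma IsBestPairing.arcCount_le_one (hE : ∀ v, ¬ E v v) {σ : V → V} (hσ : IsBestPairing E σ)
    {v : V} (hv : IsBad E σ v) (hw : ∀ x, Linked E v x → arcCount E x (σ x) = 1) {x y : V}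
    (hx : x = v ∨ Linked E v x) (hy : y = v ∨ Linked E v y) : arcCount E x y ≤ 1 := by
  have hvx : ∀ x, Linked E v x → arcCount E v x ≤ 1 := fun x hx =>
    (hσ.arcCount_le hE hv hx).trans (hw x hx).le
  rcases hx with rfl | hx
  · rcases hy with rfl | hy
    · simp [arcCount_self hE]
    · exact hvx y hy
  · rcases hy with rfl | hy
    · rw [arcCount_comm]
      exact hvx x hx
    · by_cases hxy : Linked E x y
      · have hne : y ≠ x := by
          rintro rfl
          exact hxy.elim (hE _) (hE _)
        have hnv : y ≠ v := by
          rintro rfl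
          exact hy.elim (hE _) (hE _)
        by_cases hyx : y = σ x
        · rw [hyx]
          exact (hw x hx).le
        · have h1 := (hσ.exchange hE hv hx (hw x hx)).arcCount_le hE
            (hσ.isBad_exchange hE hv hx) hxy
          rw [roleSwap_of_ne hσ.invol hv.1 hne hnv hyx, hw y hy] at h1
          exact h1
      · rw [arcCount_eq_zero hxy]
        exact zero_le_one

lemma IsBestPairing.exists_payment (hE : ∀ v, ¬ E v v) {σ : V → V} (hσ : IsBestPairing E σ)
    {v : V} (hv : IsBad E σ v) :
    ∃ T : Finset V, (∀ x ∈ T, σ x ≠ x ∧ Pays E σ v x) ∧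
      2 * (outTrunc E v : ℤ) ≤ ∑ x ∈ T, surplus E σ x := by
  classical
  set N := univ.filter fun u => Linked E v u with hN
  have memN : ∀ x, x ∈ N ↔ Linked E v x := by simp [hN]
  have hNσ : ∀ x ∈ N, σ x ≠ x := fun x hx => hσ.ne_of_linked hE hv.1 ((memN x).1 hx)
  have hNpay : ∀ x ∈ N, σ x ≠ x ∧ Pays E σ v x := fun x hx => ⟨hNσ x hx, Or.inl ((memN x).1 hx)⟩
  have hf3 : outTrunc E v ≤ 3 := min_le_right _ _
  have hfN : outTrunc E v ≤ N.card := (min_le_left _ _).trans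
    (Finset.card_le_card fun x hx => (memN x).2 (Or.inl (by simpa using hx)))
  have hcard : ∀ T : Finset V, (∀ x ∈ T, σ x ≠ x) → (T.card : ℤ) ≤ ∑ x ∈ T, surplus E σ x := by
    intro T hT
    rw [Finset.card_eq_sum_ones]
    push_cast
    exact Finset.sum_le_sum fun x hx => hσ.one_le_surplus (hT x hx)
  by_cases h6 : 6 ≤ N.card
  · refine ⟨N, hNpay, ?_⟩
    have := hcard N hNσ
    omega
  by_cases hw : ∀ x, Linked E v x → arcCount E x (σ x) = 1
  swap
  · push Not at hw
    obtain ⟨x, hx, hx1⟩ := hw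
    refine ⟨N, hNpay, ?_⟩
    have hxN := (memN x).2 hx
    have h1 := (hσ.linked x (hNσ x hxN)).one_le_arcCount
    have h2 : surplus E σ x ≤ ∑ x ∈ N, surplus E σ x :=
      Finset.single_le_sum (f := surplus E σ)
        (fun y hy => zero_le_one.trans (hσ.one_le_surplus (hNσ y hy))) hxN
    have h3 : outTrunc E x ≤ 3 := min_le_right _ _
    have h4 : 8 ≤ surplus E σ x := by
      unfold surplus
      omega
    omega
  by_cases hz : ∃ u z, Linked E v u ∧ Linked E u z ∧ ¬ Linked E v z ∧ z ≠ v
  · obtain ⟨u, z, hu, huz, hvz, hzv⟩ := hz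
    have hzσ : σ z ≠ z := fun h => hσ.not_linked_partner hE hzv h hv.1 huz.symm (hv.2 u hu)
    have hvz' : ¬ Linked E v (σ z) := by
      intro h
      have := hv.2 _ h
      rw [hσ.invol] at this
      exact hvz this
    have hzσ' : σ (σ z) ≠ σ z := by
      rw [hσ.invol]
      exact hzσ.symm
    refine ⟨insert z (insert (σ z) N), ?_, ?_⟩
    · intro x hx
      rw [mem_insert, mem_insert] at hx
      rcases hx with rfl | rfl | hx
      · exact ⟨hzσ, Or.inr ⟨u, x, hu, huz, hvz, hzv, Or.inl rfl⟩⟩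
      · exact ⟨hzσ', Or.inr ⟨u, z, hu, huz, hvz, hzv, Or.inr rfl⟩⟩
      · exact hNpay x hx
    · have heven : Even N.card := by
        have : ∑ x ∈ N, (1 : ZMod 2) = 0 := by
          refine Finset.sum_involution (fun x _ => σ x) ?_ ?_ ?_ ?_
          · intro x _
            decide
          · intro x hx _
            exact hNσ x hx
          · intro x hx
            exact (memN _).2 (hv.2 x ((memN x).1 hx))
          · intro x _
            exact hσ.invol x
        simpa [ZMod.natCast_eq_zero_iff_even] using this
      have h1 := hcard (insert z (insert (σ z) N)) (by
        intro x hx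
        rw [mem_insert, mem_insert] at hx
        rcases hx with rfl | rfl | hx
        · exact hzσ
        · exact hzσ'
        · exact hNσ x hx)
      rw [Finset.card_insert_of_notMem (by simp [hzσ.symm, memN, hvz]),
        Finset.card_insert_of_notMem (by simp [memN, hvz'])] at h1
      obtain ⟨r, hr⟩ := heven
      omega
  · push Not at hz
    refine ⟨N, hNpay, ?_⟩
    have hvN : v ∉ N := fun h => ((memN v).1 h).elim (hE v) (hE v)
    set S := insert v N with hS
    have memS : ∀ x, x ∈ S ↔ x = v ∨ Linked E v x := by simp [hS, memN]
    have hout : ∀ x ∈ S, outTrunc E x ≤ ∑ y ∈ S, if E x y then 1 else 0 := by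
      intro x hx
      refine (min_le_left _ _).trans ?_
      rw [← Finset.card_filter]
      refine Finset.card_le_card fun y hy => ?_
      have hxy : E x y := by simpa using hy
      refine mem_filter.2 ⟨(memS y).2 ?_, hxy⟩
      rcases (memS x).1 hx with rfl | hx
      · exact Or.inr (Or.inl hxy)
      · by_contra hcon
        push Not at hcon
        exact hcon.1 (hz x y hx (Or.inl hxy) hcon.2)
    have htot : 2 * ∑ x ∈ S, outTrunc E x ≤ S.card * (S.card - 1) := by
      calc 2 * ∑ x ∈ S, outTrunc E x
          ≤ 2 * ∑ x ∈ S, ∑ y ∈ S, (if E x y then 1 else 0) :=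
            Nat.mul_le_mul_left _ (Finset.sum_le_sum hout)
        _ = ∑ x ∈ S, ∑ y ∈ S, arcCount E x y := by
            unfold arcCount
            simp only [Finset.sum_add_distrib]
            rw [two_mul]
            congr 1
            exact Finset.sum_comm
        _ ≤ ∑ x ∈ S, ∑ y ∈ S.erase x, 1 := by
            refine Finset.sum_le_sum fun x hx => ?_
            rw [← Finset.add_sum_erase S _ hx, arcCount_self hE, zero_add]
            refine Finset.sum_le_sum fun y hy => ?_
            exact hσ.arcCount_le_one hE hv hw ((memS x).1 hx)
              ((memS y).1 (Finset.mem_of_mem_erase hy))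
        _ = S.card * (S.card - 1) := by
            rw [Finset.sum_const_nat]
            intro x hx
            simp [Finset.card_erase_of_mem hx]
    have hSc : S.card = N.card + 1 := Finset.card_insert_of_notMem hvN
    rw [hSc, Nat.add_sub_cancel, hS, Finset.sum_insert hvN] at htot
    have hsur : ∑ x ∈ N, surplus E σ x = 7 * N.card - 2 * ∑ x ∈ N, (outTrunc E x : ℤ) := by
      unfold surplus
      rw [Finset.sum_sub_distrib, ← Finset.mul_sum, ← Finset.mul_sum]
      congr 2
      rw [Finset.card_eq_sum_ones]
      push_cast
      exact Finset.sum_congr rfl fun x hx => by rw [hw x ((memN x).1 hx)]; rfl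
    rw [hsur]
    zify at htot
    have hn : (N.card : ℤ) ≤ 6 := by omega
    nlinarith

lemma IsBestPairing.two_mul_sum_outTrunc_le (hE : ∀ v, ¬ E v v) {σ : V → V}
    (hσ : IsBestPairing E σ) :
    2 * ∑ v, outTrunc E v ≤ 7 * pairWeight E σ + 6 * (goodSet E σ).card := by
  classical
  set Bad := univ.filter fun v => IsBad E σ v with hB
  have memBad : ∀ v, v ∈ Bad ↔ IsBad E σ v := by simp [hB]
  choose! T hT hTs using fun v (hv : IsBad E σ v) => hσ.exists_payment hE hv
  have hdisj : (Bad : Set V).PairwiseDisjoint T := by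
    intro v hv v' hv' hne
    rw [Function.onFun, Finset.disjoint_left]
    intro x hx hx'
    rw [mem_coe, memBad] at hv hv'
    exact hσ.not_pays_pays hE hv hv' hne (hT v hv x hx).2 (hT v' hv' x hx').2
  have h1 : 2 * ∑ v ∈ Bad, (outTrunc E v : ℤ) ≤ ∑ x ∈ matched σ, surplus E σ x := by
    calc 2 * ∑ v ∈ Bad, (outTrunc E v : ℤ)
        ≤ ∑ v ∈ Bad, ∑ x ∈ T v, surplus E σ x := by
          rw [Finset.mul_sum]
          exact Finset.sum_le_sum fun v hv => hTs v ((memBad v).1 hv)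
      _ = ∑ x ∈ Bad.biUnion T, surplus E σ x := (Finset.sum_biUnion hdisj).symm
      _ ≤ ∑ x ∈ matched σ, surplus E σ x := by
          refine Finset.sum_le_sum_of_subset_of_nonneg ?_ ?_
          · intro x hx
            obtain ⟨v, hv, hx⟩ := mem_biUnion.1 hx
            exact mem_matched.2 (hT v ((memBad v).1 hv) x hx).1
          · intro x hx _
            exact zero_le_one.trans (hσ.one_le_surplus (mem_matched.1 hx))
  have h2 : ∑ x ∈ matched σ, surplus E σ x =
      7 * pairWeight E σ - 2 * ∑ x ∈ matched σ, (outTrunc E x : ℤ) := by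
    unfold surplus
    rw [Finset.sum_sub_distrib, ← Finset.mul_sum, ← Finset.mul_sum]
    congr 2
    unfold pairWeight
    push_cast
    refine Finset.sum_subset (Finset.subset_univ _) fun x _ hx => ?_
    rw [mem_matched, not_not] at hx
    rw [hx, arcCount_self hE]
    rfl
  have h3 : ∑ v ∈ goodSet E σ, (outTrunc E v : ℤ) ≤ 3 * (goodSet E σ).card := by
    rw [mul_comm, ← nsmul_eq_mul]
    refine Finset.sum_le_card_nsmul _ _ _ fun v _ => ?_
    exact_mod_cast min_le_right _ _
  have h4 : ∑ v, (outTrunc E v : ℤ) ≤ ∑ x ∈ matched σ, (outTrunc E x : ℤ) +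
      (∑ v ∈ goodSet E σ, (outTrunc E v : ℤ) + ∑ v ∈ Bad, (outTrunc E v : ℤ)) := by
    have hcover : (univ : Finset V) = matched σ ∪ (goodSet E σ ∪ Bad) := by
      ext v
      simp only [mem_univ, mem_union, mem_matched, mem_goodSet, memBad, true_iff]
      by_cases hv : σ v = v
      · by_cases hg : IsGood E σ v
        · exact Or.inr (Or.inl hg)
        · exact Or.inr (Or.inr (isBad_of_not_isGood hv hg))
      · exact Or.inl hv
    have hun : ∀ s t : Finset V, ∑ v ∈ s ∪ t, (outTrunc E v : ℤ) ≤
        ∑ v ∈ s, (outTrunc E v : ℤ) + ∑ v ∈ t, (outTrunc E v : ℤ) := by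
      intro s t
      rw [← Finset.sum_union_inter]
      exact le_add_of_nonneg_right (Finset.sum_nonneg fun v _ => by positivity)
    rw [hcover]
    exact (hun _ _).trans (add_le_add_right (hun _ _) _)
  zify
  linarith

/-- A digraph contains vertex-disjoint stars, the leaves of each star being pairwise
non-adjacent, that cover many arcs. -/
theorem exists_stars (hE : ∀ v, ¬ E v v) :
    ∃ c : V → V, (∀ v, c (c v) = c v) ∧ (∀ v, c v ≠ v → Linked E v (c v)) ∧
      (∀ u v, c u ≠ u → c v ≠ v → c u = c v → ¬ Linked E u v) ∧
      ∑ v, outTrunc E v ≤ 7 * ∑ v, arcCount E v (c v) := by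
  classical
  obtain ⟨σ, hσ⟩ := exists_isBestPairing E
  choose! w hw hwn using fun v (hv : IsGood E σ v) => hv.2
  have hirr : ∀ v, ¬ Linked E v v := fun v h => h.elim (hE v) (hE v)
  have hwm : ∀ v, IsGood E σ v → σ (w v) ≠ w v := fun v hv =>
    hσ.ne_of_linked hE hv.1 (hw v hv)
  let att : V → Prop := fun x => ∃ v, IsGood E σ v ∧ w v = x
  let e := Fintype.equivFin V
  let lead : V → Prop := fun x => att x ∨ (¬ att (σ x) ∧ e x < e (σ x))
  have hatt : ∀ x, σ x ≠ x → att x → ¬ att (σ x) := by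
    rintro x hx ⟨v, hv, rfl⟩ ⟨v', hv', h'⟩
    have hne : v ≠ v' := by
      rintro rfl
      exact hx h'.symm
    refine hσ.not_linked_partner hE hne hv.1 hv'.1 (hw v hv) ?_
    rw [← h']
    exact hw v' hv'
  have hlead : ∀ x, σ x ≠ x → (lead (σ x) ↔ ¬ lead x) := by
    intro x hx
    have hx' : σ (σ x) ≠ σ x := by
      rw [hσ.invol]
      exact hx.symm
    have hne : e x ≠ e (σ x) := fun h => hx (e.injective h).symm
    have ha := hatt x hx
    have ha' := hatt (σ x) hx'
    simp only [lead, hσ.invol] at ha' ⊢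
    generalize att x = p at ha ha' ⊢
    generalize att (σ x) = q at ha ha' ⊢
    rcases lt_or_gt_of_ne hne with h | h
    · by_cases hp : p <;> by_cases hq : q <;> simp_all [h.le]
    · by_cases hp : p <;> by_cases hq : q <;> simp_all [h.le]
  let c : V → V := fun v => if σ v = v then (if IsGood E σ v then w v else v)
    else if lead v then v else σ v
  have cgood : ∀ v, IsGood E σ v → c v = w v := fun v hv => by simp [c, hv.1, hv]
  have cfix : ∀ v, σ v = v → ¬ IsGood E σ v → c v = v := fun v hv hg => by simp [c, hv, hg]
  have clead : ∀ v, σ v ≠ v → lead v → c v = v := fun v hv hl => by simp [c, hv, hl]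
  have cnlead : ∀ v, σ v ≠ v → ¬ lead v → c v = σ v := fun v hv hl => by simp [c, hv, hl]
  have cases : ∀ v, c v ≠ v → IsGood E σ v ∨ (σ v ≠ v ∧ ¬ lead v) := by
    intro v hv
    by_cases h1 : σ v = v
    · by_cases h2 : IsGood E σ v
      · exact Or.inl h2
      · exact absurd (cfix v h1 h2) hv
    · by_cases h2 : lead v
      · exact absurd (clead v h1 h2) hv
      · exact Or.inr ⟨h1, h2⟩
  have hmain : ∀ u v, IsGood E σ u → σ v ≠ v → ¬ lead v → c u = c v → ¬ Linked E u v := by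
    intro u v hu hv hl h
    rw [cgood u hu, cnlead v hv hl] at h
    have := hwn u hu
    rwa [h, hσ.invol] at this
  refine ⟨c, ?_, ?_, ?_, ?_⟩
  · intro v
    by_cases h : c v = v
    · rw [h, h]
    · rcases cases v h with hg | ⟨hm, hl⟩
      · rw [cgood v hg]
        exact clead _ (hwm v hg) (Or.inl ⟨v, hg, rfl⟩)
      · rw [cnlead v hm hl]
        refine clead _ ?_ ((hlead v hm).2 hl)
        rw [hσ.invol]
        exact hm.symm
  · intro v h
    rcases cases v h with hg | ⟨hm, hl⟩
    · rw [cgood v hg]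
      exact hw v hg
    · rw [cnlead v hm hl]
      exact hσ.linked v hm
  · intro u v hu hv huv
    rcases cases u hu with hg | ⟨hm, hl⟩
    · rcases cases v hv with hg' | ⟨hm', hl'⟩
      · by_cases hne : u = v
        · rw [hne]
          exact hirr v
        · exact hσ.not_linked hne hg.1 hg'.1
      · exact hmain u v hg hm' hl' huv
    · rcases cases v hv with hg' | ⟨hm', hl'⟩
      · exact fun h => hmain v u hg' hm hl huv.symm h.symm
      · rw [cnlead u hm hl, cnlead v hm' hl'] at huv
        have : u = v := by rw [← hσ.invol u, huv, hσ.invol]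
        rw [this]
        exact hirr v
  · have h1 := hσ.two_mul_sum_outTrunc_le hE
    have h2 : ∑ v, arcCount E v (c v) = ∑ v ∈ goodSet E σ, arcCount E v (w v) +
        ∑ v ∈ (matched σ).filter (fun v => ¬ lead v), arcCount E v (σ v) := by
      have e1 : ∑ v ∈ goodSet E σ, arcCount E v (w v) =
          ∑ v ∈ goodSet E σ, arcCount E v (c v) :=
        Finset.sum_congr rfl fun v hv => by rw [cgood v (mem_goodSet.1 hv)]
      have e2 : ∑ v ∈ (matched σ).filter (fun v => ¬ lead v), arcCount E v (σ v) =
          ∑ v ∈ (matched σ).filter (fun v => ¬ lead v), arcCount E v (c v) := by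
        refine Finset.sum_congr rfl fun v hv => ?_
        rw [mem_filter, mem_matched] at hv
        rw [cnlead v hv.1 hv.2]
      rw [e1, e2, ← Finset.sum_union]
      · refine (Finset.sum_subset (Finset.subset_univ _) fun v _ hv => ?_).symm
        have hcv : c v = v := by
          by_contra h
          rcases cases v h with hg | hm
          · exact hv (mem_union_left _ (mem_goodSet.2 hg))
          · exact hv (mem_union_right _ (mem_filter.2 ⟨mem_matched.2 hm.1, hm.2⟩))
        rw [hcv, arcCount_self hE]
      · rw [Finset.disjoint_left]
        intro v hv hv'
        exact mem_matched.1 (mem_filter.1 hv').1 (mem_goodSet.1 hv).1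
    have h3 : (goodSet E σ).card ≤ ∑ v ∈ goodSet E σ, arcCount E v (w v) := by
      rw [Finset.card_eq_sum_ones]
      exact Finset.sum_le_sum fun v hv => (hw v (mem_goodSet.1 hv)).one_le_arcCount
    have h4 : pairWeight E σ =
        2 * ∑ v ∈ (matched σ).filter (fun v => ¬ lead v), arcCount E v (σ v) := by
      have h5 : pairWeight E σ = ∑ v ∈ matched σ, arcCount E v (σ v) := by
        refine (Finset.sum_subset (Finset.subset_univ _) fun v _ hv => ?_).symm
        rw [mem_matched, not_not] at hv
        rw [hv, arcCount_self hE]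
      have h6 : ∑ v ∈ (matched σ).filter lead, arcCount E v (σ v) =
          ∑ v ∈ (matched σ).filter (fun v => ¬ lead v), arcCount E v (σ v) := by
        have hm : ∀ v, σ v ≠ v → σ (σ v) ≠ σ v := fun v hv => by
          rw [hσ.invol]
          exact hv.symm
        refine Finset.sum_nbij' σ σ ?_ ?_ ?_ ?_ ?_
        · intro v hv
          rw [mem_filter, mem_matched] at hv ⊢
          exact ⟨hm v hv.1, fun h => (hlead v hv.1).1 h hv.2⟩
        · intro v hv
          rw [mem_filter, mem_matched] at hv ⊢
          exact ⟨hm v hv.1, (hlead v hv.1).2 hv.2⟩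
        · intro v _
          exact hσ.invol v
        · intro v _
          exact hσ.invol v
        · intro v _
          rw [hσ.invol, arcCount_comm]
      rw [h5, ← Finset.sum_filter_add_sum_filter_not (matched σ) lead, h6]
      ring
    omega

end Stars

section BiasedEstimates

lemma biased_three {n b θ m I₁ I₂ I₃ O₁ O₂ O₃ IP OP IM OM : ℝ} (hb : 0 ≤ b)
    (hO₁ : 0 ≤ O₁) (hO₂ : 0 ≤ O₂) (hO₃ : 0 ≤ O₃) (hOP : 0 ≤ OP) (hIM : 0 ≤ IM)
    (hOM : 0 ≤ OM) (hI₃ : I₃ ≤ n)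
    (hn : 4 * n ≤ I₁ + I₂ + I₃ + IP + IM + b)
    (hm : m = I₁ + I₂ + I₃ + O₁ + O₂ + O₃ + IP + OP + IM + OM + b) (hθ : m ≤ 7 * θ)
    (hP : IP ≤ OP) (hM : OM ≤ IM)
    (h₁ : θ + (OP - IP) + (IM - OM) ≤ (I₂ - O₂) + (I₃ - O₃) - (I₁ - O₁))
    (h₂ : θ + (OP - IP) + (IM - OM) ≤ (I₁ - O₁) + (I₃ - O₃) - (I₂ - O₂))
    (h₃ : θ + (OP - IP) + (IM - OM) ≤ (I₁ - O₁) + (I₂ - O₂) - (I₃ - O₃)) :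
    (3 / 14 * m ≤ 3 / 8 * (O₂ + O₃) + 5 / 8 * (I₁ + IP + IM) + 15 / 64 * b ∧
      3 / 14 * m ≤ 3 / 8 * (I₂ + I₃) + 5 / 8 * (O₁ + OP + OM) + 15 / 64 * b) ∨
    (3 / 14 * m ≤ 3 / 8 * (O₁ + O₃ + OP) + 5 / 8 * (I₂ + IM) + 15 / 64 * b ∧
      3 / 14 * m ≤ 3 / 8 * (I₁ + I₃ + IP) + 5 / 8 * (O₂ + OM) + 15 / 64 * b) ∨
    (3 / 14 * m ≤ 3 / 8 * (O₁ + O₂ + OP) + 5 / 8 * (I₃ + IM) + 15 / 64 * b ∧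
      3 / 14 * m ≤ 3 / 8 * (I₁ + I₂ + IP) + 5 / 8 * (O₃ + OM) + 15 / 64 * b) := by
  by_contra hcon
  simp only [not_or, not_and_or, not_le] at hcon
  obtain ⟨c₁, c₂, c₃⟩ := hcon
  rcases c₁ with c₁ | c₁ <;> rcases c₂ with c₂ | c₂ <;> rcases c₃ with c₃ | c₃ <;> linarith

lemma biased_five {b θ m I₁ I₂ I₃ I₄ I₅ O₁ O₂ O₃ O₄ O₅ IP OP IM OM : ℝ} (hb : 0 ≤ b)
    (hO₁ : 0 ≤ O₁) (hO₂ : 0 ≤ O₂) (hO₃ : 0 ≤ O₃) (hO₄ : 0 ≤ O₄) (hO₅ : 0 ≤ O₅)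
    (hIP : 0 ≤ IP) (hOP : 0 ≤ OP) (hIM : 0 ≤ IM)
    (hm : m = I₁ + I₂ + I₃ + I₄ + I₅ + O₁ + O₂ + O₃ + O₄ + O₅ + IP + OP + IM + OM + b)
    (hθ : m ≤ 7 * θ) (hP : IP ≤ OP) (hM : OM ≤ IM)
    (h₃ : θ ≤ I₃ - O₃) (h₄ : θ ≤ I₄ - O₄) (h₅ : θ ≤ I₅ - O₅)
    (h₁₂ : θ + (OP - IP) + (IM - OM) ≤
      (I₃ - O₃) + (I₄ - O₄) + (I₅ - O₅) - (I₁ - O₁) - (I₂ - O₂))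
    (h₃₄ : θ + (OP - IP) + (IM - OM) ≤
      (I₁ - O₁) + (I₂ - O₂) + (I₅ - O₅) - (I₃ - O₃) - (I₄ - O₄))
    (h₃₅ : θ + (OP - IP) + (IM - OM) ≤
      (I₁ - O₁) + (I₂ - O₂) + (I₄ - O₄) - (I₃ - O₃) - (I₅ - O₅))
    (h₄₅ : θ + (OP - IP) + (IM - OM) ≤
      (I₁ - O₁) + (I₂ - O₂) + (I₃ - O₃) - (I₄ - O₄) - (I₅ - O₅)) :
    3 / 14 * m ≤ 2 / 5 * (O₃ + O₄ + O₅ + OP + OM) + 3 / 5 * (I₁ + I₂) + 6 / 25 * b ∧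
      3 / 14 * m ≤ 2 / 5 * (I₃ + I₄ + I₅ + IP + IM) + 3 / 5 * (O₁ + O₂) + 6 / 25 * b := by
  constructor <;> linarith

lemma biased_five_one {n b θ m I₁ I₂ I₃ I₄ I₅ O₁ O₂ O₃ O₄ O₅ IP OP IM OM : ℝ} (hb : 0 ≤ b)
    (hO₁ : 0 ≤ O₁) (hO₂ : 0 ≤ O₂) (hO₃ : 0 ≤ O₃) (hO₄ : 0 ≤ O₄) (hI₅0 : 0 ≤ I₅)
    (hIP : 0 ≤ IP) (hOP : 0 ≤ OP) (hIM : 0 ≤ IM) (hOM : 0 ≤ OM)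
    (hI₄ : I₄ ≤ n) (hO₅ : O₅ ≤ n)
    (hn : 4 * n ≤ I₁ + I₂ + I₃ + I₄ + I₅ + IP + IM + b)
    (hm : m = I₁ + I₂ + I₃ + I₄ + I₅ + O₁ + O₂ + O₃ + O₄ + O₅ + IP + OP + IM + OM + b)
    (hθ : m ≤ 7 * θ) (hP : IP ≤ OP) (hM : OM ≤ IM)
    (h₁ : θ ≤ I₁ - O₁) (h₃ : θ ≤ I₃ - O₃) (h₄ : θ ≤ I₄ - O₄) (h₅ : θ ≤ O₅ - I₅)
    (h₁₂ : θ + (OP - IP) + (IM - OM) ≤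
      (I₃ - O₃) + (I₄ - O₄) + (O₅ - I₅) - (I₁ - O₁) - (I₂ - O₂))
    (h₁₃ : θ + (OP - IP) + (IM - OM) ≤
      (I₂ - O₂) + (I₄ - O₄) + (O₅ - I₅) - (I₁ - O₁) - (I₃ - O₃)) :
    3 / 14 * m ≤ 2 / 3 * (O₃ + O₄ + O₅ + OP + OM) + 1 / 3 * (I₁ + I₂) + 2 / 9 * b ∧
      3 / 14 * m ≤ 2 / 3 * (I₃ + I₄ + I₅ + IP + IM) + 1 / 3 * (O₁ + O₂) + 2 / 9 * b := by
  constructor <;> linarith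

end BiasedEstimates

section Signs

variable {V : Type} [DecidableEq V]

/-- The sum of `y` over `X`, the terms outside `S` being counted negatively. -/
def signSum (X : Finset V) (y : V → ℝ) (S : Finset V) : ℝ :=
  ∑ i ∈ X, if i ∈ S then y i else -y i

lemma signSum_congr {X S S' : Finset V} (y : V → ℝ) (h : ∀ i ∈ X, i ∈ S ↔ i ∈ S') :
    signSum X y S = signSum X y S' :=
  Finset.sum_congr rfl fun i hi => by simp only [h i hi]

lemma exists_signSum_insert {X : Finset V} {i : V} (hi : i ∉ X) (y : V → ℝ) (S : Finset V) :
    (∃ S', signSum (insert i X) y S' = y i + signSum X y S) ∧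
      ∃ S', signSum (insert i X) y S' = -y i + signSum X y S := by
  constructor
  · refine ⟨insert i S, ?_⟩
    rw [signSum, Finset.sum_insert hi, if_pos (mem_insert_self _ _)]
    congr 1
    refine signSum_congr y fun j hj => ?_
    have : j ≠ i := fun h => hi (h ▸ hj)
    simp [this]
  · refine ⟨S.erase i, ?_⟩
    rw [signSum, Finset.sum_insert hi, if_neg (notMem_erase _ _)]
    congr 1
    refine signSum_congr y fun j hj => ?_
    have : j ≠ i := fun h => hi (h ▸ hj)
    simp [this]

/-- Signs for small terms can be chosen greedily. -/
lemma exists_abs_add_signSum_lt {y : V → ℝ} {θ : ℝ} (R : Finset V)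
    (hR : ∀ i ∈ R, 0 ≤ y i ∧ y i < θ) :
    ∀ t : ℝ, |t| < θ + ∑ i ∈ R, y i → ∃ S, |t + signSum R y S| < θ := by
  induction R using Finset.induction_on with
  | empty =>
    intro t ht
    exact ⟨∅, by simpa [signSum] using ht⟩
  | insert i R hi ih =>
    intro t ht
    have hi' := hR i (mem_insert_self _ _)
    have hR' : ∀ j ∈ R, 0 ≤ y j ∧ y j < θ := fun j hj => hR j (mem_insert_of_mem hj)
    have hG : 0 ≤ ∑ j ∈ R, y j := Finset.sum_nonneg fun j hj => (hR' j hj).1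
    rw [Finset.sum_insert hi, abs_lt] at ht
    rcases le_total 0 t with h | h
    · obtain ⟨S, hS⟩ := ih hR' (t - y i) (by rw [abs_lt]; constructor <;> linarith)
      obtain ⟨S', hS'⟩ := (exists_signSum_insert hi y S).2
      exact ⟨S', by rw [hS', ← add_assoc]; exact hS⟩
    · obtain ⟨S, hS⟩ := ih hR' (t + y i) (by rw [abs_lt]; constructor <;> linarith)
      obtain ⟨S', hS'⟩ := (exists_signSum_insert hi y S).1
      exact ⟨S', by rw [hS', ← add_assoc]; exact hS⟩

/-- An even number of terms in `[θ, 2θ)` can be balanced up to less than `θ`. -/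
lemma exists_abs_signSum_lt_of_even {y : V → ℝ} {θ : ℝ} (hθ : 0 < θ) (k : ℕ) :
    ∀ H : Finset V, H.card = 2 * k → (∀ i ∈ H, θ ≤ y i ∧ y i < 2 * θ) →
      ∃ S, |signSum H y S| < θ := by
  induction k with
  | zero =>
    intro H hH _
    rw [mul_zero, card_eq_zero] at hH
    exact ⟨∅, by simpa [hH, signSum] using hθ⟩
  | succ k ih =>
    intro H hH hy
    obtain ⟨i, hi⟩ : H.Nonempty := by
      rw [← card_pos]
      omega
    have hi' : (H.erase i).card = 2 * k + 1 := by
      rw [card_erase_of_mem hi]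
      omega
    obtain ⟨j, hj⟩ : (H.erase i).Nonempty := by
      rw [← card_pos]
      omega
    have hj' : ((H.erase i).erase j).card = 2 * k := by
      rw [card_erase_of_mem hj]
      omega
    obtain ⟨S, hS⟩ := ih _ hj' fun x hx => hy x (mem_of_mem_erase (mem_of_mem_erase hx))
    have yi := hy i hi
    have yj := hy j (mem_of_mem_erase hj)
    rw [abs_lt] at hS
    have hins := exists_signSum_insert (notMem_erase j (H.erase i)) y S
    rw [insert_erase hj] at hins
    obtain ⟨⟨S₁, h₁⟩, S₂, h₂⟩ := hins
    have hins₁ := exists_signSum_insert (notMem_erase i H) y S₁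
    have hins₂ := exists_signSum_insert (notMem_erase i H) y S₂
    rw [insert_erase hi] at hins₁ hins₂
    obtain ⟨T₁, hT₁⟩ := hins₁.2
    obtain ⟨T₂, hT₂⟩ := hins₂.1
    rw [h₁] at hT₁
    rw [h₂] at hT₂
    rcases le_total 0 (signSum ((H.erase i).erase j) y S) with h | h <;>
      rcases le_total (y j) (y i) with h' | h'
    · exact ⟨T₁, by rw [hT₁, abs_lt]; constructor <;> linarith⟩
    · exact ⟨T₂, by rw [hT₂, abs_lt]; constructor <;> linarith⟩
    · exact ⟨T₂, by rw [hT₂, abs_lt]; constructor <;> linarith⟩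
    · exact ⟨T₁, by rw [hT₁, abs_lt]; constructor <;> linarith⟩

section Gap

variable {X : Finset V} {y : V → ℝ} {θ : ℝ} (hy : ∀ i ∈ X, 0 ≤ y i)
  (hmin : ∀ S, θ ≤ |signSum X y S|)

include hy hmin

/-- If no signed sum of all terms is smaller than `θ`, then the terms smaller than `θ` cannot
compensate any signed sum of the others. -/
lemma add_sum_le_abs_signSum (T : Finset V) :
    θ + ∑ i ∈ X with y i < θ, y i ≤ |signSum (X.filter fun i => ¬ y i < θ) y T| := by
  by_contra h
  rw [not_le] at h
  obtain ⟨S, hS⟩ := exists_abs_add_signSum_lt (X.filter fun i => y i < θ)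
    (fun i hi => ⟨hy i (mem_filter.1 hi).1, (mem_filter.1 hi).2⟩) _ h
  refine (hmin (S.filter (fun i => y i < θ) ∪ T.filter fun i => ¬ y i < θ)).not_gt ?_
  have hsplit : signSum X y (S.filter (fun i => y i < θ) ∪ T.filter fun i => ¬ y i < θ) =
      signSum (X.filter fun i => ¬ y i < θ) y T + signSum (X.filter fun i => y i < θ) y S := by
    rw [signSum, ← Finset.sum_filter_add_sum_filter_not X (fun i => y i < θ), add_comm]
    congr 1
    · refine signSum_congr y fun i hi => ?_
      simp [not_lt.1 (mem_filter.1 hi).2]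
    · refine signSum_congr y fun i hi => ?_
      simp [(mem_filter.1 hi).2]
  rwa [hsplit]

lemma odd_card_large (hθ : 0 < θ) (hy2 : ∀ i ∈ X, y i < 2 * θ) :
    Odd (X.filter fun i => ¬ y i < θ).card := by
  rw [← Nat.not_even_iff_odd]
  rintro ⟨k, hk⟩
  obtain ⟨T, hT⟩ := exists_abs_signSum_lt_of_even hθ k (X.filter fun i => ¬ y i < θ)
    (by omega) (fun i hi => ⟨not_lt.1 (mem_filter.1 hi).2, hy2 i (mem_filter.1 hi).1⟩)
  have h1 := add_sum_le_abs_signSum hy hmin T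
  have h2 : 0 ≤ ∑ i ∈ X with y i < θ, y i :=
    Finset.sum_nonneg fun i hi => hy i (mem_filter.1 hi).1
  linarith

end Gap

lemma signSum_eq_sub {H T : Finset V} (hT : T ⊆ H) (y : V → ℝ) :
    signSum H y (H \ T) = ∑ i ∈ H, y i - 2 * ∑ i ∈ T, y i := by
  have h1 : signSum H y (H \ T) = ∑ i ∈ H, (y i - 2 * if i ∈ T then y i else 0) := by
    refine Finset.sum_congr rfl fun i hi => ?_
    by_cases h : i ∈ T
    · simp [h]
      ring
    · simp [h, hi]
  rw [h1, Finset.sum_sub_distrib, ← Finset.mul_sum, Finset.sum_ite_mem,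
    Finset.inter_eq_right.2 hT]

section Majority

variable {H : Finset V} {y : V → ℝ} {θ t : ℝ} (hθ : 0 < θ) (ht : θ ≤ t)
  (hy : ∀ i ∈ H, θ ≤ y i ∧ y i < 7 / 4 * θ)
  (hs : ∀ T ⊆ H, t ≤ |∑ i ∈ H, y i - 2 * ∑ i ∈ T, y i|)

include hθ ht hy hs

lemma le_sum_sub_two_mul_sum {T : Finset V} (hT : T ⊆ H) (hc : H.card = 2 * T.card + 1)
    (hT2 : T.card ≤ 2) : t ≤ ∑ i ∈ H, y i - 2 * ∑ i ∈ T, y i := by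
  have h1 : ∑ i ∈ T, y i ≤ T.card * (7 / 4 * θ) := by
    rw [← nsmul_eq_mul]
    exact Finset.sum_le_card_nsmul _ _ _ fun i hi => (hy i (hT hi)).2.le
  have h2 : (H \ T).card * θ ≤ ∑ i ∈ H \ T, y i := by
    rw [← nsmul_eq_mul]
    exact Finset.card_nsmul_le_sum _ _ _ fun i hi => (hy i (mem_sdiff.1 hi).1).1
  have h3 : (H \ T).card = T.card + 1 := by
    rw [card_sdiff_of_subset hT]
    omega
  have h4 := Finset.sum_sdiff (f := y) hT
  rw [h3] at h2
  push_cast at h2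
  have h5 : (T.card : ℝ) ≤ 2 := by exact_mod_cast hT2
  have h6 : -θ < ∑ i ∈ H, y i - 2 * ∑ i ∈ T, y i := by nlinarith
  rcases le_abs.1 (hs T hT) with h | h
  · exact h
  · linarith

lemma card_mul_le_sum (hc : H.card = 1 ∨ H.card = 3 ∨ H.card = 5) :
    H.card * t ≤ ∑ i ∈ H, y i := by
  have key := @le_sum_sub_two_mul_sum V _ H y θ t hθ ht hy hs
  rcases hc with hc | hc | hc
  · have := key (empty_subset H) (by simp [hc]) (by simp)
    rw [hc]
    simp at this
    push_cast
    linarith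
  · obtain ⟨a, b, c, hab, hac, hbc, rfl⟩ := card_eq_three.1 hc
    have h1 := key (T := {a}) (by simp) (by simp [hc]) (by simp)
    have h2 := key (T := {b}) (by simp) (by simp [hc]) (by simp)
    have h3 := key (T := {c}) (by simp) (by simp [hc]) (by simp)
    rw [hc]
    simp [hab, hac, hbc] at h1 h2 h3 ⊢
    linarith
  · obtain ⟨a, H', ha, rfl, hc'⟩ := card_eq_succ.1 hc
    obtain ⟨b, H'', hb, rfl, hc''⟩ := card_eq_succ.1 hc'
    obtain ⟨c, d, e, hcd, hce, hde, rfl⟩ := card_eq_three.1 hc''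
    simp only [mem_insert, mem_singleton, not_or] at ha hb
    obtain ⟨hab, hac, had, hae⟩ := ha
    obtain ⟨hbc, hbd, hbe⟩ := hb
    have h1 := key (T := {a, b}) (by grind) (by simp [hc, hab]) (by simp [hab])
    have h2 := key (T := {b, c}) (by grind) (by simp [hc, hbc]) (by simp [hbc])
    have h3 := key (T := {c, d}) (by grind) (by simp [hc, hcd]) (by simp [hcd])
    have h4 := key (T := {d, e}) (by grind) (by simp [hc, hde]) (by simp [hde])
    have h5 := key (T := {a, e}) (by grind) (by simp [hc, hae]) (by simp [hae])
    rw [hc]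
    simp [hab, hac, had, hae, hbc, hbd, hbe, hcd, hce, hde] at h1 h2 h3 h4 h5 ⊢
    linarith

end Majority

end Signs

section Unbiased

variable {V : Type}

/-- The weight of the arcs from `x` to `Y`. -/
def outTo (a : V → V → ℝ) (Y : Finset V) (x : V) : ℝ := ∑ v ∈ Y, a x v

/-- The weight of the arcs from `Y` to `x`. -/
def inFrom (a : V → V → ℝ) (Y : Finset V) (x : V) : ℝ := ∑ v ∈ Y, a v x

lemma local_balance_le {a : V → V → ℝ} (ha : ∀ u v, 0 ≤ a u v ∧ a u v ≤ 1) {r β : ℝ}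
    {X P M R : Finset V}
    (hX : ∀ F : V → ℝ, ∑ x ∈ X, F x = ∑ x ∈ P, F x + ∑ x ∈ M, F x + ∑ x ∈ R, F x)
    (hr : 1 ≤ r) (hr7 : r * (P.card + M.card) = 7) (hPM : M.card ≤ P.card + 1) {v : V}
    (hv : 4 ≤ ∑ x ∈ X, a v x + β) :
    r * ∑ x ∈ P, (a x v - a v x) + r * ∑ x ∈ M, (a v x - a x v) + ∑ x ∈ R, (a x v - a v x) ≤
      ∑ x ∈ X, (a x v + a v x) + β + min β 3 := by
  have bound : ∀ s : ℝ, 1 ≤ s → s ≤ 2 →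
      r * ∑ x ∈ P, (a x v - a v x) + r * ∑ x ∈ M, (a v x - a x v) +
        ∑ x ∈ R, (a x v - a v x) - ∑ x ∈ X, (a x v + a v x) + s * ∑ x ∈ X, a v x ≤
      P.card * (r - 1) + M.card * (r - 1 + s) := by
    intro s hs hs2
    have h1 : ∑ x ∈ P, (r * (a x v - a v x) - (a x v + a v x) + s * a v x) ≤
        P.card * (r - 1) := by
      rw [← nsmul_eq_mul]
      refine Finset.sum_le_card_nsmul _ _ _ fun x _ => ?_
      nlinarith [ha x v, ha v x]
    have h2 : ∑ x ∈ M, (r * (a v x - a x v) - (a x v + a v x) + s * a v x) ≤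
        M.card * (r - 1 + s) := by
      rw [← nsmul_eq_mul]
      refine Finset.sum_le_card_nsmul _ _ _ fun x _ => ?_
      nlinarith [ha x v, ha v x]
    have h3 : ∑ x ∈ R, ((a x v - a v x) - (a x v + a v x) + s * a v x) ≤ 0 :=
      Finset.sum_nonpos fun x _ => by nlinarith [ha v x]
    rw [hX, hX]
    simp only [Finset.sum_add_distrib, Finset.sum_sub_distrib, ← Finset.mul_sum] at h1 h2 h3 ⊢
    linarith
  have hPM' : (M.card : ℝ) ≤ P.card + 1 := by exact_mod_cast hPM
  have h1 := bound 1 le_rfl one_le_two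
  have h2 := bound 2 one_le_two le_rfl
  rcases min_cases β 3 with h | h
  · rw [h.1]
    nlinarith
  · rw [h.1]
    nlinarith

variable [Fintype V] [DecidableEq V]

lemma balance_le {a : V → V → ℝ} (ha : ∀ u v, 0 ≤ a u v ∧ a u v ≤ 1) {r : ℝ}
    {X P M R : Finset V}
    (hX : ∀ F : V → ℝ, ∑ x ∈ X, F x = ∑ x ∈ P, F x + ∑ x ∈ M, F x + ∑ x ∈ R, F x)
    (hr : 1 ≤ r) (hr7 : r * (P.card + M.card) = 7) (hPM : M.card ≤ P.card + 1)
    (hout : ∀ v, 4 ≤ ∑ x, a v x) :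
    r * ∑ x ∈ P, (outTo a Xᶜ x - inFrom a Xᶜ x) + r * ∑ x ∈ M, (inFrom a Xᶜ x - outTo a Xᶜ x) +
        ∑ x ∈ R, (outTo a Xᶜ x - inFrom a Xᶜ x) ≤
      ∑ x ∈ X, (outTo a Xᶜ x + inFrom a Xᶜ x) + ∑ v ∈ Xᶜ, outTo a Xᶜ v +
        ∑ v ∈ Xᶜ, min (outTo a Xᶜ v) 3 := by
  have h : ∀ v ∈ Xᶜ, _ := fun v _ => local_balance_le ha hX hr hr7 hPM (v := v)
    (β := outTo a Xᶜ v) (by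
      have := hout v
      rwa [← Finset.sum_add_sum_compl X] at this)
  have h' := Finset.sum_le_sum h
  have swap : ∀ (Q : Finset V) (F : V → V → ℝ),
      ∑ v ∈ Xᶜ, ∑ x ∈ Q, F x v = ∑ x ∈ Q, ∑ v ∈ Xᶜ, F x v := fun Q F => Finset.sum_comm
  simp only [Finset.sum_add_distrib, ← Finset.mul_sum] at h' ⊢
  rw [swap P (fun x v => a x v - a v x), swap M (fun x v => a v x - a x v),
    swap R (fun x v => a x v - a v x), swap X (fun x v => a x v),
    swap X (fun x v => a v x)] at h'
  simp only [Finset.sum_sub_distrib] at h' ⊢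
  exact h'

end Unbiased

section Core

variable {V : Type} [DecidableEq V]

/-- The expected weight of the arcs with exactly one end in `X` crossing in one direction, when the
vertices of `X ∩ T` are on the second side, those of `X \ T` on the first side, and every other
vertex is on the first side with probability `p`. -/
def biasedCut (O I : V → ℝ) (X T : Finset V) (p : ℝ) : ℝ :=
  ∑ x ∈ X, if x ∈ T then p * I x else (1 - p) * O x

lemma sum_ite_of_subset {Q T : Finset V} (h : Q ⊆ T) (p q : ℝ) (F F' : V → ℝ) :
    ∑ x ∈ Q, (if x ∈ T then p * F x else q * F' x) = p * ∑ x ∈ Q, F x := by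
  rw [Finset.mul_sum]
  exact Finset.sum_congr rfl fun x hx => if_pos (h hx)

lemma sum_ite_of_disjoint {Q T : Finset V} (h : Disjoint Q T) (p q : ℝ) (F F' : V → ℝ) :
    ∑ x ∈ Q, (if x ∈ T then p * F x else q * F' x) = q * ∑ x ∈ Q, F' x := by
  rw [Finset.mul_sum]
  exact Finset.sum_congr rfl fun x hx => if_neg (Finset.disjoint_left.1 h hx)

lemma sum_eq_pair_add_sum_sdiff {X : Finset V} {a₁ a₂ : V} (h₁₂ : a₁ ≠ a₂) (ha₁ : a₁ ∈ X)
    (ha₂ : a₂ ∈ X) (F : V → ℝ) :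
    ∑ x ∈ X, F x = F a₁ + F a₂ + ∑ x ∈ X \ {a₁, a₂}, F x := by
  have h : {a₁, a₂} ⊆ X := by simp [insert_subset_iff, ha₁, ha₂]
  rw [← Finset.sum_sdiff h, Finset.sum_pair h₁₂, add_comm]

lemma biasedCut_pair {X : Finset V} {a₁ a₂ : V} (h₁₂ : a₁ ≠ a₂) (ha₁ : a₁ ∈ X) (ha₂ : a₂ ∈ X)
    (O I : V → ℝ) (p : ℝ) :
    biasedCut O I X {a₁, a₂} p =
      p * (I a₁ + I a₂) + (1 - p) * ∑ x ∈ X \ {a₁, a₂}, O x := by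
  rw [biasedCut, sum_eq_pair_add_sum_sdiff h₁₂ ha₁ ha₂, sum_ite_of_disjoint sdiff_disjoint]
  simp [mul_add]

section Configurations

variable {O I : V → ℝ} {X RP RM : Finset V} {n b θ m : ℝ} (hO : ∀ x, 0 ≤ O x)
  (hI : ∀ x, 0 ≤ I x) (hOn : ∀ x, O x ≤ n) (hIn : ∀ x, I x ≤ n) (hb : 0 ≤ b)
  (hn : 4 * n ≤ ∑ x ∈ X, I x + b) (hm : m = ∑ x ∈ X, (O x + I x) + b) (hθ : m ≤ 7 * θ)
  (hP : ∀ x ∈ RP, I x ≤ O x) (hM : ∀ x ∈ RM, O x ≤ I x) (hPM : Disjoint RP RM)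

include hO hI hIn hb hn hm hθ hP hM hPM in
lemma exists_biasedCut_three {a₁ a₂ a₃ : V} (h₁₂ : a₁ ≠ a₂) (h₁₃ : a₁ ≠ a₃) (h₂₃ : a₂ ≠ a₃)
    (hX : ∀ F : V → ℝ, ∑ x ∈ X, F x = ∑ x ∈ {a₁, a₂, a₃}, F x + ∑ x ∈ RP, F x + ∑ x ∈ RM, F x)
    (hRP : Disjoint {a₁, a₂, a₃} RP) (hRM : Disjoint {a₁, a₂, a₃} RM)
    (h₁ : θ + (∑ x ∈ RP, O x - ∑ x ∈ RP, I x) + (∑ x ∈ RM, I x - ∑ x ∈ RM, O x) ≤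
      (I a₂ - O a₂) + (I a₃ - O a₃) - (I a₁ - O a₁))
    (h₂ : θ + (∑ x ∈ RP, O x - ∑ x ∈ RP, I x) + (∑ x ∈ RM, I x - ∑ x ∈ RM, O x) ≤
      (I a₁ - O a₁) + (I a₃ - O a₃) - (I a₂ - O a₂))
    (h₃ : θ + (∑ x ∈ RP, O x - ∑ x ∈ RP, I x) + (∑ x ∈ RM, I x - ∑ x ∈ RM, O x) ≤
      (I a₁ - O a₁) + (I a₂ - O a₂) - (I a₃ - O a₃)) :
    ∃ T p, 0 ≤ p ∧ p ≤ 1 ∧ 3 / 14 * m ≤ biasedCut O I X T p + p * (1 - p) * b ∧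
      3 / 14 * m ≤ biasedCut I O X T p + p * (1 - p) * b := by
  have expand : ∀ F : V → ℝ, ∑ x ∈ X, F x =
      F a₁ + F a₂ + F a₃ + ∑ x ∈ RP, F x + ∑ x ∈ RM, F x := fun F => by
    rw [hX, Finset.sum_insert (by simp [h₁₂, h₁₃]), Finset.sum_pair h₂₃]
    ring
  rw [expand] at hm hn
  simp only [Finset.sum_add_distrib] at hm
  simp only [disjoint_insert_left, disjoint_singleton_left] at hRP hRM
  rcases biased_three hb (hO a₁) (hO a₂) (hO a₃) (Finset.sum_nonneg fun x _ => hO x)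
    (Finset.sum_nonneg fun x _ => hI x) (Finset.sum_nonneg fun x _ => hO x) (hIn a₃)
    (by linarith) (by linarith) hθ (Finset.sum_le_sum hP) (Finset.sum_le_sum hM) h₁ h₂ h₃
    with h | h | h
  · refine ⟨{a₁} ∪ (RP ∪ RM), 5 / 8, by norm_num, by norm_num, ?_⟩
    have e₁ : RP ⊆ {a₁} ∪ (RP ∪ RM) := by grind
    have e₂ : RM ⊆ {a₁} ∪ (RP ∪ RM) := by grind
    simp only [biasedCut, expand, sum_ite_of_subset e₁, sum_ite_of_subset e₂]
    simp only [mem_union, mem_singleton, hRP, hRM, h₁₂.symm, h₁₃.symm, or_false, if_true, if_false]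
    constructor <;> linarith
  · refine ⟨{a₂} ∪ RM, 5 / 8, by norm_num, by norm_num, ?_⟩
    have e₁ : Disjoint RP ({a₂} ∪ RM) := by simp [hRP, hPM]
    have e₂ : RM ⊆ {a₂} ∪ RM := by grind
    simp only [biasedCut, expand, sum_ite_of_disjoint e₁, sum_ite_of_subset e₂]
    simp only [mem_union, mem_singleton, hRM, h₁₂, h₂₃.symm, or_false, if_true, if_false]
    constructor <;> linarith
  · refine ⟨{a₃} ∪ RM, 5 / 8, by norm_num, by norm_num, ?_⟩
    have e₁ : Disjoint RP ({a₃} ∪ RM) := by simp [hRP, hPM]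
    have e₂ : RM ⊆ {a₃} ∪ RM := by grind
    simp only [biasedCut, expand, sum_ite_of_disjoint e₁, sum_ite_of_subset e₂]
    simp only [mem_union, mem_singleton, hRM, h₁₃, h₂₃, or_false, if_true, if_false]
    constructor <;> linarith

include hO hI hb hm hθ hP hM in
lemma exists_biasedCut_five {a₁ a₂ a₃ a₄ a₅ : V} (h₁₂ : a₁ ≠ a₂)
    (hX : ∀ F : V → ℝ, ∑ x ∈ X, F x =
      F a₁ + F a₂ + F a₃ + F a₄ + F a₅ + ∑ x ∈ RP, F x + ∑ x ∈ RM, F x)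
    (ha₁ : a₁ ∈ X) (ha₂ : a₂ ∈ X)
    (h₃ : θ ≤ I a₃ - O a₃) (h₄ : θ ≤ I a₄ - O a₄) (h₅ : θ ≤ I a₅ - O a₅)
    (k₁₂ : θ + (∑ x ∈ RP, O x - ∑ x ∈ RP, I x) + (∑ x ∈ RM, I x - ∑ x ∈ RM, O x) ≤
      (I a₃ - O a₃) + (I a₄ - O a₄) + (I a₅ - O a₅) - (I a₁ - O a₁) - (I a₂ - O a₂))
    (k₃₄ : θ + (∑ x ∈ RP, O x - ∑ x ∈ RP, I x) + (∑ x ∈ RM, I x - ∑ x ∈ RM, O x) ≤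
      (I a₁ - O a₁) + (I a₂ - O a₂) + (I a₅ - O a₅) - (I a₃ - O a₃) - (I a₄ - O a₄))
    (k₃₅ : θ + (∑ x ∈ RP, O x - ∑ x ∈ RP, I x) + (∑ x ∈ RM, I x - ∑ x ∈ RM, O x) ≤
      (I a₁ - O a₁) + (I a₂ - O a₂) + (I a₄ - O a₄) - (I a₃ - O a₃) - (I a₅ - O a₅))
    (k₄₅ : θ + (∑ x ∈ RP, O x - ∑ x ∈ RP, I x) + (∑ x ∈ RM, I x - ∑ x ∈ RM, O x) ≤
      (I a₁ - O a₁) + (I a₂ - O a₂) + (I a₃ - O a₃) - (I a₄ - O a₄) - (I a₅ - O a₅)) :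
    ∃ T p, 0 ≤ p ∧ p ≤ 1 ∧ 3 / 14 * m ≤ biasedCut O I X T p + p * (1 - p) * b ∧
      3 / 14 * m ≤ biasedCut I O X T p + p * (1 - p) * b := by
  rw [hX] at hm
  simp only [Finset.sum_add_distrib] at hm
  have hQ : ∀ F : V → ℝ, ∑ x ∈ X \ {a₁, a₂}, F x =
      F a₃ + F a₄ + F a₅ + ∑ x ∈ RP, F x + ∑ x ∈ RM, F x := fun F => by
    linarith [hX F, sum_eq_pair_add_sum_sdiff h₁₂ ha₁ ha₂ F]
  have h := biased_five hb (hO a₁) (hO a₂) (hO a₃) (hO a₄) (hO a₅)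
    (Finset.sum_nonneg fun x _ => hI x) (Finset.sum_nonneg fun x _ => hO x)
    (Finset.sum_nonneg fun x _ => hI x) (by linarith) hθ (Finset.sum_le_sum hP)
    (Finset.sum_le_sum hM) h₃ h₄ h₅ k₁₂ k₃₄ k₃₅ k₄₅
  refine ⟨{a₁, a₂}, 3 / 5, by norm_num, by norm_num, ?_⟩
  rw [biasedCut_pair h₁₂ ha₁ ha₂, biasedCut_pair h₁₂ ha₁ ha₂, hQ, hQ]
  constructor <;> linarith

include hO hI hOn hIn hb hn hm hθ hP hM in
lemma exists_biasedCut_five_one {a₁ a₂ a₃ a₄ a₅ : V} (h₁₂ : a₁ ≠ a₂)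
    (hX : ∀ F : V → ℝ, ∑ x ∈ X, F x =
      F a₁ + F a₂ + F a₃ + F a₄ + F a₅ + ∑ x ∈ RP, F x + ∑ x ∈ RM, F x)
    (ha₁ : a₁ ∈ X) (ha₂ : a₂ ∈ X)
    (h₁ : θ ≤ I a₁ - O a₁) (h₃ : θ ≤ I a₃ - O a₃) (h₄ : θ ≤ I a₄ - O a₄) (h₅ : θ ≤ O a₅ - I a₅)
    (k₁₂ : θ + (∑ x ∈ RP, O x - ∑ x ∈ RP, I x) + (∑ x ∈ RM, I x - ∑ x ∈ RM, O x) ≤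
      (I a₃ - O a₃) + (I a₄ - O a₄) + (O a₅ - I a₅) - (I a₁ - O a₁) - (I a₂ - O a₂))
    (k₁₃ : θ + (∑ x ∈ RP, O x - ∑ x ∈ RP, I x) + (∑ x ∈ RM, I x - ∑ x ∈ RM, O x) ≤
      (I a₂ - O a₂) + (I a₄ - O a₄) + (O a₅ - I a₅) - (I a₁ - O a₁) - (I a₃ - O a₃)) :
    ∃ T p, 0 ≤ p ∧ p ≤ 1 ∧ 3 / 14 * m ≤ biasedCut O I X T p + p * (1 - p) * b ∧
      3 / 14 * m ≤ biasedCut I O X T p + p * (1 - p) * b := by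
  rw [hX] at hm hn
  simp only [Finset.sum_add_distrib] at hm
  have hQ : ∀ F : V → ℝ, ∑ x ∈ X \ {a₁, a₂}, F x =
      F a₃ + F a₄ + F a₅ + ∑ x ∈ RP, F x + ∑ x ∈ RM, F x := fun F => by
    linarith [hX F, sum_eq_pair_add_sum_sdiff h₁₂ ha₁ ha₂ F]
  have h := biased_five_one hb (hO a₁) (hO a₂) (hO a₃) (hO a₄) (hI a₅)
    (Finset.sum_nonneg fun x _ => hI x) (Finset.sum_nonneg fun x _ => hO x)
    (Finset.sum_nonneg fun x _ => hI x) (Finset.sum_nonneg fun x _ => hO x) (hIn a₄) (hOn a₅)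
    (by linarith) (by linarith) hθ (Finset.sum_le_sum hP) (Finset.sum_le_sum hM) h₁ h₃ h₄ h₅
    k₁₂ k₁₃
  refine ⟨{a₁, a₂}, 1 / 3, by norm_num, by norm_num, ?_⟩
  rw [biasedCut_pair h₁₂ ha₁ ha₂, biasedCut_pair h₁₂ ha₁ ha₂, hQ, hQ]
  constructor <;> linarith

include hO hI hOn hIn hb hn hm hθ hP hM hPM in
lemma exists_biasedCut_of_card {H P M : Finset V} {y : V → ℝ} (hH : H = P ∪ M)
    (hX : ∀ F : V → ℝ, ∑ x ∈ X, F x = ∑ x ∈ H, F x + ∑ x ∈ RP, F x + ∑ x ∈ RM, F x)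
    (hHX : H ⊆ X) (hHP : Disjoint H RP) (hHM : Disjoint H RM) (hd : Disjoint P M)
    (hy : ∀ x ∈ H, θ ≤ y x) (hyP : ∀ x ∈ P, y x = O x - I x) (hyM : ∀ x ∈ M, y x = I x - O x)
    (key : ∀ T ⊆ H, H.card = 2 * T.card + 1 → T.card ≤ 2 →
      θ + ((∑ x ∈ RP, O x - ∑ x ∈ RP, I x) + (∑ x ∈ RM, I x - ∑ x ∈ RM, O x)) ≤
        ∑ x ∈ H, y x - 2 * ∑ x ∈ T, y x)
    (hcases : (P.card = 0 ∧ (M.card = 3 ∨ M.card = 5)) ∨ (P.card = 1 ∧ M.card = 4)) :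
    ∃ T p, 0 ≤ p ∧ p ≤ 1 ∧ 3 / 14 * m ≤ biasedCut O I X T p + p * (1 - p) * b ∧
      3 / 14 * m ≤ biasedCut I O X T p + p * (1 - p) * b := by
  rw [← add_assoc] at key
  subst hH
  rcases hcases with ⟨hPc, hMc | hMc⟩ | ⟨hPc, hMc⟩
  · obtain rfl := card_eq_zero.1 hPc
    obtain ⟨a₁, a₂, a₃, h₁₂, h₁₃, h₂₃, rfl⟩ := card_eq_three.1 hMc
    rw [empty_union] at *
    have k : ∀ T ⊆ ({a₁, a₂, a₃} : Finset V), T.card = 1 → _ := fun T hT hc =>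
      key T hT (by omega) (by omega)
    have k₁ := k {a₁} (by simp) (by simp)
    have k₂ := k {a₂} (by simp) (by simp)
    have k₃ := k {a₃} (by simp) (by simp)
    have y₁ := hyM a₁ (by simp)
    have y₂ := hyM a₂ (by simp)
    have y₃ := hyM a₃ (by simp)
    rw [Finset.sum_insert (by simp [h₁₂, h₁₃]), Finset.sum_pair h₂₃, Finset.sum_singleton,
      y₁, y₂, y₃] at k₁ k₂ k₃
    exact exists_biasedCut_three hO hI hIn hb hn hm hθ hP hM hPM h₁₂ h₁₃ h₂₃ hX hHP hHM
      (by linarith) (by linarith) (by linarith)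
  · obtain rfl := card_eq_zero.1 hPc
    obtain ⟨a₁, M', ha₁, rfl, hM'⟩ := card_eq_succ.1 hMc
    obtain ⟨a₂, M'', ha₂, rfl, hM''⟩ := card_eq_succ.1 hM'
    obtain ⟨a₃, a₄, a₅, h₃₄, h₃₅, h₄₅, rfl⟩ := card_eq_three.1 hM''
    rw [empty_union] at *
    have expand : ∀ F : V → ℝ, ∑ x ∈ {a₁, a₂, a₃, a₄, a₅}, F x =
        F a₁ + F a₂ + F a₃ + F a₄ + F a₅ := fun F => by
      rw [Finset.sum_insert ha₁, Finset.sum_insert ha₂,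
        Finset.sum_insert (by simp [h₃₄, h₃₅]), Finset.sum_pair h₄₅]
      ring
    have h₁₂ : a₁ ≠ a₂ := fun h => ha₁ (by simp [h])
    have k : ∀ c d, c ≠ d → c ∈ ({a₁, a₂, a₃, a₄, a₅} : Finset V) →
        d ∈ ({a₁, a₂, a₃, a₄, a₅} : Finset V) → _ := fun c d hcd hc hd =>
      key {c, d} (by simp only [insert_subset_iff, singleton_subset_iff, hc, hd, and_self])
        (by rw [hMc, card_pair hcd]) (by rw [card_pair hcd])
    have k₁₂ := k a₁ a₂ h₁₂ (by simp) (by simp)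
    have k₃₄ := k a₃ a₄ h₃₄ (by simp) (by simp)
    have k₃₅ := k a₃ a₅ h₃₅ (by simp) (by simp)
    have k₄₅ := k a₄ a₅ h₄₅ (by simp) (by simp)
    have y₁ := hyM a₁ (by simp)
    have y₂ := hyM a₂ (by simp)
    have y₃ := hyM a₃ (by simp)
    have y₄ := hyM a₄ (by simp)
    have y₅ := hyM a₅ (by simp)
    have z₃ := hy a₃ (by simp)
    have z₄ := hy a₄ (by simp)
    have z₅ := hy a₅ (by simp)
    rw [Finset.sum_pair h₁₂] at k₁₂
    rw [Finset.sum_pair h₃₄] at k₃₄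
    rw [Finset.sum_pair h₃₅] at k₃₅
    rw [Finset.sum_pair h₄₅] at k₄₅
    rw [expand, y₁, y₂, y₃, y₄, y₅] at k₁₂ k₃₄ k₃₅ k₄₅
    exact exists_biasedCut_five hO hI hb hm hθ hP hM h₁₂ (fun F => by rw [hX, expand])
      (hHX (by simp)) (hHX (by simp)) (y₃ ▸ z₃) (y₄ ▸ z₄) (y₅ ▸ z₅)
      (by linarith) (by linarith) (by linarith) (by linarith)
  · obtain ⟨a₅, rfl⟩ := card_eq_one.1 hPc
    obtain ⟨a₁, M', ha₁, rfl, hM'⟩ := card_eq_succ.1 hMc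
    obtain ⟨a₂, a₃, a₄, h₂₃, h₂₄, h₃₄, rfl⟩ := card_eq_three.1 hM'
    have expand : ∀ F : V → ℝ, ∑ x ∈ {a₅} ∪ {a₁, a₂, a₃, a₄}, F x =
        F a₁ + F a₂ + F a₃ + F a₄ + F a₅ := fun F => by
      rw [Finset.sum_union hd, Finset.sum_insert ha₁,
        Finset.sum_insert (by simp [h₂₃, h₂₄]), Finset.sum_pair h₃₄, Finset.sum_singleton]
      ring
    have h₁₂ : a₁ ≠ a₂ := fun h => ha₁ (by simp [h])
    have h₁₃ : a₁ ≠ a₃ := fun h => ha₁ (by simp [h])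
    have k : ∀ c d, c ≠ d → c ∈ ({a₁, a₂, a₃, a₄} : Finset V) →
        d ∈ ({a₁, a₂, a₃, a₄} : Finset V) → _ := fun c d hcd hc hd' =>
      key {c, d} (by
          simp only [insert_subset_iff, singleton_subset_iff, mem_union_right _ hc,
            mem_union_right _ hd', and_self])
        (by rw [card_union_of_disjoint hd, hMc, hPc, card_pair hcd]) (by rw [card_pair hcd])
    have k₁₂ := k a₁ a₂ h₁₂ (by simp) (by simp)
    have k₁₃ := k a₁ a₃ h₁₃ (by simp) (by simp)
    have y₁ := hyM a₁ (by simp)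
    have y₂ := hyM a₂ (by simp)
    have y₃ := hyM a₃ (by simp)
    have y₄ := hyM a₄ (by simp)
    have y₅ := hyP a₅ (by simp)
    have z₁ := hy a₁ (by simp)
    have z₃ := hy a₃ (by simp)
    have z₄ := hy a₄ (by simp)
    have z₅ := hy a₅ (by simp)
    rw [Finset.sum_pair h₁₂] at k₁₂
    rw [Finset.sum_pair h₁₃] at k₁₃
    rw [expand, y₁, y₂, y₃, y₄, y₅] at k₁₂ k₁₃
    exact exists_biasedCut_five_one hO hI hOn hIn hb hn hm hθ hP hM h₁₂
      (fun F => by rw [hX, expand]) (hHX (by simp)) (hHX (by simp)) (y₁ ▸ z₁) (y₃ ▸ z₃)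
      (y₄ ▸ z₄) (y₅ ▸ z₅) (by linarith) (by linarith)

end Configurations

lemma le_abs_signSum_abs {X : Finset V} {g : V → ℝ} {θ : ℝ} (h : ∀ S, θ ≤ |signSum X g S|)
    (S : Finset V) : θ ≤ |signSum X (fun i => |g i|) S| := by
  have hS : signSum X (fun i => |g i|) S =
      signSum X g (X.filter fun i => i ∈ S ↔ 0 ≤ g i) := by
    refine Finset.sum_congr rfl fun i hi => ?_
    rcases le_or_gt 0 (g i) with h' | h'
    · simp [hi, h', abs_of_nonneg]
    · by_cases hiS : i ∈ S <;> simp [hi, hiS, h', abs_of_neg]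
  rw [hS]
  exact h _

/-- Either some signed sum is small compared to the total weight, or a biased random placement
works. -/
lemma exists_signSum_le_or_biasedCut_of_balance [Fintype V] {O I : V → ℝ} {X : Finset V}
    {n b m μ : ℝ} (hO : ∀ x, 0 ≤ O x) (hI : ∀ x, 0 ≤ I x) (hOn : ∀ x, O x ≤ n)
    (hIn : ∀ x, I x ≤ n) (hb : 0 ≤ b) (hn : 4 * n ≤ ∑ x ∈ X, I x + b)
    (hm : m = ∑ x ∈ X, (O x + I x) + b) (hμ : 0 ≤ μ)
    (hbal : ∀ (P M R : Finset V) (r : ℝ),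
      (∀ F : V → ℝ, ∑ x ∈ X, F x = ∑ x ∈ P, F x + ∑ x ∈ M, F x + ∑ x ∈ R, F x) → 1 ≤ r →
      r * (P.card + M.card) = 7 → M.card ≤ P.card + 1 →
      r * ∑ x ∈ P, (O x - I x) + r * ∑ x ∈ M, (I x - O x) + ∑ x ∈ R, (O x - I x) ≤ m + μ) :
    (∃ S, 7 * |signSum X (fun x => O x - I x) S| ≤ m + μ) ∨
    ∃ T p, 0 ≤ p ∧ p ≤ 1 ∧ 3 / 14 * m ≤ biasedCut O I X T p + p * (1 - p) * b ∧
      3 / 14 * m ≤ biasedCut I O X T p + p * (1 - p) * b := by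
  obtain ⟨S₀, -, hS₀⟩ := Finset.exists_min_image (univ : Finset (Finset V))
    (fun S => |signSum X (fun x => O x - I x) S|) ⟨∅, mem_univ _⟩
  refine or_iff_not_imp_left.2 fun hcon => ?_
  push Not at hcon
  obtain ⟨θ, hθ, hmin⟩ : ∃ θ, m + μ < 7 * θ ∧ ∀ S, θ ≤ |signSum X (fun x => O x - I x) S| :=
    ⟨_, hcon S₀, fun S => hS₀ S (mem_univ S)⟩
  have hmin := le_abs_signSum_abs hmin
  obtain ⟨y, hy⟩ : ∃ y : V → ℝ, y = fun i => |O i - I i| := ⟨_, rfl⟩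
  rw [← hy] at hmin
  have hyP : ∀ i, I i ≤ O i → y i = O i - I i := fun i hi => by
    rw [hy]
    exact abs_of_nonneg (by linarith)
  have hyM : ∀ i, O i ≤ I i → y i = I i - O i := fun i hi => by
    rw [hy]
    exact (abs_sub_comm _ _).trans (abs_of_nonneg (by linarith))
  have hy0 : ∀ i, 0 ≤ y i := fun i => hy ▸ abs_nonneg _
  have hIm : ∑ x ∈ X, I x + b ≤ m := by
    have : ∑ x ∈ X, I x ≤ ∑ x ∈ X, (O x + I x) :=
      Finset.sum_le_sum fun x _ => le_add_of_nonneg_left (hO x)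
    linarith
  have hm0 : 0 ≤ m := by
    have := Finset.sum_nonneg fun x (_ : x ∈ X) => hI x
    linarith
  have hθ0 : 0 < θ := by linarith
  have hy74 : ∀ i, y i < 7 / 4 * θ := fun i => by
    have h1 := hO i
    have h2 := hI i
    have h3 := hOn i
    have h4 := hIn i
    rcases le_total (I i) (O i) with h | h
    · rw [hyP i h]
      linarith
    · rw [hyM i h]
      linarith
  have hyle : ∀ i, y i ≤ O i + I i := fun i => by
    rcases le_total (I i) (O i) with h | h
    · rw [hyP i h]
      linarith [hI i]
    · rw [hyM i h]
      linarith [hO i]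
  have hodd := odd_card_large (fun i _ => hy0 i) hmin hθ0 fun i _ => by linarith [hy74 i]
  have hlarge := add_sum_le_abs_signSum (fun i _ => hy0 i) hmin
  have split := fun F : V → ℝ => Finset.sum_filter_add_sum_filter_not X (fun i => y i < θ) F
  have hyH : ∀ i ∈ X.filter fun i => ¬ y i < θ, θ ≤ y i ∧ y i < 7 / 4 * θ := fun i hi =>
    ⟨not_lt.1 (mem_filter.1 hi).2, hy74 i⟩
  have hRX : X.filter (fun i => y i < θ) ⊆ X := filter_subset _ _
  have hHX : X.filter (fun i => ¬ y i < θ) ⊆ X := filter_subset _ _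
  have hdis : Disjoint (X.filter fun i => ¬ y i < θ) (X.filter fun i => y i < θ) :=
    (disjoint_filter_filter_not X X _).symm
  generalize (X.filter fun i => ¬ y i < θ) = H at *
  generalize (X.filter fun i => y i < θ) = R at *
  have splitR := fun F : V → ℝ => Finset.sum_filter_add_sum_filter_not R (fun i => I i ≤ O i) F
  have splitH := fun F : V → ℝ => Finset.sum_filter_add_sum_filter_not H (fun i => I i ≤ O i) F
  have hRP : ∀ i ∈ R.filter fun i => I i ≤ O i, I i ≤ O i := fun i hi => (mem_filter.1 hi).2
  have hRM : ∀ i ∈ R.filter fun i => ¬ I i ≤ O i, O i ≤ I i := fun i hi =>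
    (not_le.1 (mem_filter.1 hi).2).le
  have hdisR := disjoint_filter_filter_not R R fun i => I i ≤ O i
  have hdisP : Disjoint H (R.filter fun i => I i ≤ O i) :=
    disjoint_of_subset_right (filter_subset _ _) hdis
  have hdisM : Disjoint H (R.filter fun i => ¬ I i ≤ O i) :=
    disjoint_of_subset_right (filter_subset _ _) hdis
  have hG : ∑ i ∈ R, y i = (∑ i ∈ R with I i ≤ O i, O i - ∑ i ∈ R with I i ≤ O i, I i) +
      (∑ i ∈ R with ¬ I i ≤ O i, I i - ∑ i ∈ R with ¬ I i ≤ O i, O i) := by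
    rw [← splitR, ← Finset.sum_sub_distrib, ← Finset.sum_sub_distrib]
    congr 1
    · exact Finset.sum_congr rfl fun i hi => hyP i (hRP i hi)
    · exact Finset.sum_congr rfl fun i hi => hyM i (hRM i hi)
  have hG0 : 0 ≤ ∑ i ∈ R, y i := Finset.sum_nonneg fun i _ => hy0 i
  have hs : ∀ T ⊆ H, θ + ∑ i ∈ R, y i ≤ |∑ i ∈ H, y i - 2 * ∑ i ∈ T, y i| := fun T hT => by
    rw [← signSum_eq_sub hT]
    exact hlarge _
  have key := fun T => @le_sum_sub_two_mul_sum V _ H y θ _ hθ0 (le_add_of_nonneg_right hG0) hyH hs T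
  have hcard : H.card = 1 ∨ H.card = 3 ∨ H.card = 5 := by
    have h1 : H.card * θ ≤ ∑ i ∈ H, y i := by
      rw [← nsmul_eq_mul]
      exact Finset.card_nsmul_le_sum _ _ _ fun i hi => (hyH i hi).1
    have h2 : ∑ x ∈ X, y x ≤ ∑ x ∈ X, (O x + I x) := Finset.sum_le_sum fun x _ => hyle x
    have h3 : (H.card : ℝ) < 7 := by
      by_contra h
      rw [not_lt] at h
      have := split y
      nlinarith
    have h4 : H.card < 7 := by exact_mod_cast h3
    obtain ⟨k, hk⟩ := hodd
    omega
  have hPM := Finset.card_filter_add_card_filter_not (s := H) fun i => I i ≤ O i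
  have hP : ∀ i ∈ H.filter fun i => I i ≤ O i, y i = O i - I i := fun i hi =>
    hyP i (mem_filter.1 hi).2
  have hM : ∀ i ∈ H.filter fun i => ¬ I i ≤ O i, y i = I i - O i := fun i hi =>
    hyM i (not_le.1 (mem_filter.1 hi).2).le
  have hPH : (H.filter fun i => I i ≤ O i) ∪ H.filter (fun i => ¬ I i ≤ O i) = H :=
    filter_union_filter_not_eq _ _
  rcases le_or_gt (H.filter fun i => ¬ I i ≤ O i).card ((H.filter fun i => I i ≤ O i).card + 1)
    with hle | hgt
  · exfalso
    have hc0 : (0 : ℝ) < H.card := by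
      have : 0 < H.card := by omega
      exact_mod_cast this
    have hc5 : (H.card : ℝ) ≤ 5 := by
      have : H.card ≤ 5 := by omega
      exact_mod_cast this
    have h1 := hbal _ _ R (7 / H.card) (fun F => by rw [splitH, add_comm, split])
      (by rw [le_div_iff₀ hc0]; linarith)
      (by rw [← Nat.cast_add, hPM, div_mul_cancel₀ _ hc0.ne']) hle
    rw [← mul_add, ← Finset.sum_congr rfl hP, ← Finset.sum_congr rfl hM, splitH] at h1
    have h2 := card_mul_le_sum hθ0 (le_add_of_nonneg_right hG0) hyH hs hcard
    have h3 : 7 * (θ + ∑ i ∈ R, y i) ≤ 7 / H.card * ∑ i ∈ H, y i := by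
      rw [div_mul_eq_mul_div, le_div_iff₀ hc0]
      linarith
    have h4 : -∑ i ∈ R, y i ≤ ∑ i ∈ R, (O i - I i) := by
      rw [← Finset.sum_neg_distrib]
      exact Finset.sum_le_sum fun i _ => hy ▸ neg_abs_le _
    linarith
  · have h7 : m ≤ 7 * θ := by linarith
    have hX : ∀ F : V → ℝ, ∑ x ∈ X, F x = ∑ x ∈ H, F x + ∑ x ∈ R with I x ≤ O x, F x +
        ∑ x ∈ R with ¬ I x ≤ O x, F x := fun F => by
      rw [add_assoc, splitR, add_comm, split]
    have hcases : ((H.filter fun i => I i ≤ O i).card = 0 ∧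
        ((H.filter fun i => ¬ I i ≤ O i).card = 3 ∨ (H.filter fun i => ¬ I i ≤ O i).card = 5)) ∨
        (H.filter fun i => I i ≤ O i).card = 1 ∧ (H.filter fun i => ¬ I i ≤ O i).card = 4 := by
      omega
    exact exists_biasedCut_of_card hO hI hOn hIn hb hn hm h7 hRP hRM hdisR hPH.symm hX hHX hdisP
      hdisM (disjoint_filter_filter_not H H _) (fun i hi => (hyH i hi).1) hP hM
      (fun T hT h1 h2 => hG ▸ key T hT h1 h2) hcases

lemma exists_signSum_le_or_biasedCut [Fintype V] {a : V → V → ℝ}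
    (ha : ∀ u v, 0 ≤ a u v ∧ a u v ≤ 1) (X : Finset V) (hout : ∀ v, 4 ≤ ∑ x, a v x)
    {m b : ℝ} (hb : b = ∑ v ∈ Xᶜ, outTo a Xᶜ v)
    (hm : m = ∑ x ∈ X, (outTo a Xᶜ x + inFrom a Xᶜ x) + b) :
    (∃ S, 7 * |signSum X (fun x => outTo a Xᶜ x - inFrom a Xᶜ x) S| ≤
      m + ∑ v ∈ Xᶜ, min (outTo a Xᶜ v) 3) ∨
    ∃ T p, 0 ≤ p ∧ p ≤ 1 ∧
      3 / 14 * m ≤ biasedCut (outTo a Xᶜ) (inFrom a Xᶜ) X T p + p * (1 - p) * b ∧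
      3 / 14 * m ≤ biasedCut (inFrom a Xᶜ) (outTo a Xᶜ) X T p + p * (1 - p) * b := by
  have hO : ∀ x, 0 ≤ outTo a Xᶜ x := fun x => Finset.sum_nonneg fun v _ => (ha x v).1
  have hI : ∀ x, 0 ≤ inFrom a Xᶜ x := fun x => Finset.sum_nonneg fun v _ => (ha v x).1
  have hOn : ∀ x, outTo a Xᶜ x ≤ Xᶜ.card := fun x => by
    simpa [outTo] using Finset.sum_le_card_nsmul Xᶜ (fun v => a x v) 1 fun v _ => (ha x v).2
  have hIn : ∀ x, inFrom a Xᶜ x ≤ Xᶜ.card := fun x => by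
    simpa [inFrom] using Finset.sum_le_card_nsmul Xᶜ (fun v => a v x) 1 fun v _ => (ha v x).2
  have hb0 : 0 ≤ b := hb ▸ Finset.sum_nonneg fun v _ => hO v
  have hn : 4 * (Xᶜ.card : ℝ) ≤ ∑ x ∈ X, inFrom a Xᶜ x + b := by
    have h1 : ∑ v ∈ Xᶜ, (4 : ℝ) ≤ ∑ v ∈ Xᶜ, (∑ x ∈ X, a v x + outTo a Xᶜ v) :=
      Finset.sum_le_sum fun v _ => by
        have := hout v
        rwa [← Finset.sum_add_sum_compl X] at this
    rw [Finset.sum_add_distrib, ← hb, Finset.sum_comm, Finset.sum_const, nsmul_eq_mul] at h1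
    rw [mul_comm]
    exact h1
  refine exists_signSum_le_or_biasedCut_of_balance hO hI hOn hIn hb0 hn hm
    (Finset.sum_nonneg fun v _ => le_min (hO v) (by norm_num)) fun P M R r h1 h2 h3 h4 => ?_
  rw [hm, hb]
  exact balance_le ha h1 h2 h3 h4 hout

end Core

section Placement

variable {V : Type} [Fintype V]

/-- The total weight of the arcs at `u`. -/
def totalDeg (a : V → V → ℝ) (u : V) : ℝ := ∑ v, (a u v + a v u)

lemma sum_totalDeg (a : V → V → ℝ) : ∑ u, totalDeg a u = 2 * ∑ u, ∑ v, a u v := by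
  simp only [totalDeg, Finset.sum_add_distrib]
  rw [Finset.sum_comm (f := fun u v => a v u), two_mul]

lemma totalDeg_nonneg {a : V → V → ℝ} (ha : ∀ u v, 0 ≤ a u v) (u : V) : 0 ≤ totalDeg a u :=
  Finset.sum_nonneg fun v _ => add_nonneg (ha u v) (ha v u)

/-- Few vertices have a large degree. -/
lemma card_mul_le_of_totalDeg {a : V → V → ℝ} (ha : ∀ u v, 0 ≤ a u v) {Q : Finset V} {t : ℝ}
    (hQ : ∀ v ∈ Q, t ≤ totalDeg a v) : Q.card * t ≤ 2 * ∑ u, ∑ v, a u v := by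
  rw [← nsmul_eq_mul, ← sum_totalDeg]
  exact (Finset.card_nsmul_le_sum _ _ _ hQ).trans
    (Finset.sum_le_sum_of_subset_of_nonneg (subset_univ Q) fun i _ _ => totalDeg_nonneg ha i)

variable [DecidableEq V]

lemma blockWeight_eq_sum_totalDeg (a : V → V → ℝ) (c : V → V) (i : V) :
    blockWeight a c i = ∑ u, (if c u = i then 1 else 0) * totalDeg a u := by
  simp only [blockWeight, totalDeg, mul_add, Finset.sum_add_distrib, Finset.mul_sum]
  rw [Finset.sum_comm (f := fun u v => a u v * if c v = i then 1 else 0)]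
  simp only [mul_comm]

/-- A block consisting of a star whose leaves have bounded degree has small weight. -/
lemma blockWeight_le {a : V → V → ℝ} (ha : ∀ u v, 0 ≤ a u v) {c : V → V} {K : ℝ} (hK : 0 ≤ K)
    (hc : ∀ u, c u ≠ u → totalDeg a u ≤ K ∧ 1 ≤ a u (c u) + a (c u) u) (i : V) :
    blockWeight a c i ≤ (1 + K) * totalDeg a i := by
  have h : ∀ u, (if c u = i then 1 else 0) * totalDeg a u ≤
      (if i = u then totalDeg a u else 0) + K * (a i u + a u i) := by
    intro u
    have h0 : 0 ≤ K * (a i u + a u i) := mul_nonneg hK (add_nonneg (ha i u) (ha u i))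
    have h1 := totalDeg_nonneg ha u
    by_cases hu : c u = i
    · by_cases hiu : i = u
      · simp only [hu, hiu, if_true] at h0 ⊢
        linarith
      · obtain ⟨h2, h3⟩ := hc u (fun h => hiu (hu.symm.trans h))
        rw [hu] at h3
        simp only [hu, hiu, if_true, if_false]
        nlinarith
    · simp only [hu, if_false, zero_mul]
      split_ifs <;> linarith
  rw [blockWeight_eq_sum_totalDeg]
  refine (Finset.sum_le_sum fun u _ => h u).trans ?_
  rw [Finset.sum_add_distrib, Finset.sum_ite_eq, if_pos (mem_univ _), ← Finset.mul_sum]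
  exact le_of_eq (by rw [add_mul, one_mul]; rfl)

lemma sum_sum_eq_sum_blocks (F : V → V → ℝ) (X : Finset V) :
    ∑ u, ∑ v, F u v = ∑ u ∈ X, ∑ v ∈ X, F u v + ∑ x ∈ X, ∑ v ∈ Xᶜ, (F x v + F v x) +
      ∑ u ∈ Xᶜ, ∑ v ∈ Xᶜ, F u v := by
  rw [← Finset.sum_add_sum_compl X]
  simp only [← Finset.sum_add_sum_compl X (fun v => F _ v), Finset.sum_add_distrib]
  rw [Finset.sum_comm (s := Xᶜ) (t := X)]
  ring

lemma biasedCut_add_le_expCut {a : V → V → ℝ} (ha : ∀ u v, 0 ≤ a u v) (ha0 : ∀ v, a v v = 0)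
    (X T : Finset V) {p : ℝ} (hp0 : 0 ≤ p) (hp1 : p ≤ 1) :
    biasedCut (outTo a Xᶜ) (inFrom a Xᶜ) X T p + p * (1 - p) * ∑ v ∈ Xᶜ, outTo a Xᶜ v ≤
      expCut a id fun v => if v ∈ X then (if v ∈ T then 0 else 1) else p := by
  set x : V → ℝ := fun v => if v ∈ X then (if v ∈ T then 0 else 1) else p with hx
  have hx01 : ∀ v, 0 ≤ x v ∧ x v ≤ 1 := fun v => by
    simp only [hx]
    split_ifs <;> constructor <;> linarith
  have hcross : ∀ u v, a u v * crossProb id x u v = a u v * (x u * (1 - x v)) := fun u v => by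
    by_cases h : u = v
    · simp [h, ha0]
    · simp [crossProb, sideProb, h]
  have hB : ∀ v ∈ Xᶜ, x v = p := fun v hv => if_neg (mem_compl.1 hv)
  simp only [expCut, hcross]
  rw [sum_sum_eq_sum_blocks _ X]
  have h1 : 0 ≤ ∑ u ∈ X, ∑ v ∈ X, a u v * (x u * (1 - x v)) :=
    Finset.sum_nonneg fun u _ => Finset.sum_nonneg fun v _ =>
      mul_nonneg (ha u v) (mul_nonneg (hx01 u).1 (by linarith [(hx01 v).2]))
  have h2 : ∑ u ∈ X, ∑ v ∈ Xᶜ, (a u v * (x u * (1 - x v)) + a v u * (x v * (1 - x u))) =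
      biasedCut (outTo a Xᶜ) (inFrom a Xᶜ) X T p := by
    refine Finset.sum_congr rfl fun u hu => ?_
    simp only [outTo, inFrom, Finset.mul_sum]
    have hxu : x u = if u ∈ T then 0 else 1 := if_pos hu
    split_ifs at hxu ⊢ <;>
    · refine Finset.sum_congr rfl fun v hv => ?_
      rw [hB v hv, hxu]
      ring
  have h3 : ∑ u ∈ Xᶜ, ∑ v ∈ Xᶜ, a u v * (x u * (1 - x v)) =
      p * (1 - p) * ∑ v ∈ Xᶜ, outTo a Xᶜ v := by
    simp only [outTo, Finset.mul_sum]
    refine Finset.sum_congr rfl fun u hu => Finset.sum_congr rfl fun v hv => ?_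
    rw [hB u hu, hB v hv]
    ring
  linarith

lemma star_le_expCut {a : V → V → ℝ} (ha : ∀ u v, 0 ≤ a u v) (ha0 : ∀ v, a v v = 0)
    (X S : Finset V) {c : V → V} (hcc : ∀ v, c (c v) = c v) (hcX : ∀ v ∈ X, c v = v)
    (hcB : ∀ v ∈ Xᶜ, c v ∈ Xᶜ)
    (hleaf : ∀ u v, c u ≠ u → c v ≠ v → c u = c v → a u v = 0) :
    (∑ x ∈ X, (outTo a Xᶜ x + inFrom a Xᶜ x) + ∑ v ∈ Xᶜ, outTo a Xᶜ v +
        signSum X (fun x => outTo a Xᶜ x - inFrom a Xᶜ x) S +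
        ∑ v ∈ Xᶜ, (a v (c v) + a (c v) v)) / 4 ≤
      expCut a c fun v => if v ∈ X then (if v ∈ S then 1 else 0) else 1 / 2 := by
  set x : V → ℝ := fun v => if v ∈ X then (if v ∈ S then 1 else 0) else 1 / 2 with hx
  have hx01 : ∀ v, 0 ≤ x v ∧ x v ≤ 1 := fun v => by
    simp only [hx]
    split_ifs <;> constructor <;> norm_num
  have hB : ∀ v ∈ Xᶜ, sideProb c x v = 1 / 2 := fun v hv => by
    have : x (c v) = 1 / 2 := if_neg (mem_compl.1 (hcB v hv))
    rw [sideProb, this]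
    split_ifs <;> norm_num
  have hX : ∀ v ∈ X, sideProb c x v = if v ∈ S then 1 else 0 := fun v hv => by
    rw [sideProb, if_pos (hcX v hv), hcX v hv]
    exact if_pos hv
  rw [expCut, sum_sum_eq_sum_blocks _ X]
  have h1 : 0 ≤ ∑ u ∈ X, ∑ v ∈ X, a u v * crossProb c x u v :=
    Finset.sum_nonneg fun u _ => Finset.sum_nonneg fun v _ =>
      mul_nonneg (ha u v) (crossProb_mem hx01 u v).1
  have h2 : ∑ u ∈ X, ∑ v ∈ Xᶜ, (a u v * crossProb c x u v + a v u * crossProb c x v u) =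
      (∑ x ∈ X, (outTo a Xᶜ x + inFrom a Xᶜ x) +
        signSum X (fun x => outTo a Xᶜ x - inFrom a Xᶜ x) S) / 4 := by
    rw [signSum, ← Finset.sum_add_distrib, Finset.sum_div]
    refine Finset.sum_congr rfl fun u hu => ?_
    have hne : ∀ v ∈ Xᶜ, c u ≠ c v := fun v hv h =>
      mem_compl.1 (hcB v hv) (by rw [← h, hcX u hu]; exact hu)
    have h3 : ∀ v ∈ Xᶜ, a u v * crossProb c x u v + a v u * crossProb c x v u =
        (if u ∈ S then a u v else a v u) / 2 := fun v hv => by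
      rw [crossProb, crossProb, if_neg (hne v hv), if_neg (hne v hv).symm, hB v hv, hX u hu]
      split_ifs <;> ring
    rw [Finset.sum_congr rfl h3, ← Finset.sum_div]
    split_ifs
    · rw [outTo]
      ring
    · rw [inFrom]
      ring
  have h4 : ∀ u ∈ Xᶜ, ∀ v ∈ Xᶜ, (a u v + (if c u = v then a u v else 0) +
      (if c v = u then a u v else 0)) / 4 ≤ a u v * crossProb c x u v := fun u hu v hv => by
    have h0 := ha u v
    by_cases huv : u = v
    · simp [huv, ha0]
    rw [crossProb, hB u hu, hB v hv]
    by_cases hc : c u = c v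
    · rw [if_pos hc]
      by_cases hcu : c u = u <;> by_cases hcv : c v = v
      · exact absurd (hcu.symm.trans (hc.trans hcv)) huv
      · have e₁ : c u ≠ v := fun h => hcv (hc.symm.trans h)
        have e₂ : c v = u := hc.symm.trans hcu
        simp only [hcu, e₂, huv, if_true, if_false, iff_false, not_true]
        linarith
      · have e₁ : c v ≠ u := fun h => hcu (hc.trans h)
        have e₂ : c u = v := hc.trans hcv
        have e₃ : v ≠ u := fun h => huv h.symm
        simp only [hcv, e₂, e₃, if_true, if_false, iff_true]
        linarith
      · simp [hleaf u v hcu hcv hc]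
    · have e₁ : c u ≠ v := fun h => hc (by rw [← h, hcc])
      have e₂ : c v ≠ u := fun h => hc (by rw [← h, hcc])
      rw [if_neg hc, if_neg e₁, if_neg e₂]
      linarith
  have h5 := Finset.sum_le_sum fun u hu => Finset.sum_le_sum (h4 u hu)
  have h6 : ∑ u ∈ Xᶜ, ∑ v ∈ Xᶜ, (a u v + (if c u = v then a u v else 0) +
      (if c v = u then a u v else 0)) / 4 =
      (∑ v ∈ Xᶜ, outTo a Xᶜ v + ∑ v ∈ Xᶜ, (a v (c v) + a (c v) v)) / 4 := by
    simp only [← Finset.sum_div, Finset.sum_add_distrib, outTo]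
    rw [Finset.sum_comm (f := fun u v => if c v = u then a u v else 0)]
    simp only [Finset.sum_ite_eq]
    rw [add_assoc]
    congr 3
    · exact Finset.sum_congr rfl fun v hv => if_pos (hcB v hv)
    · exact Finset.sum_congr rfl fun v hv => if_pos (hcB v hv)
  rw [h6] at h5
  linarith

/-- The arc weights of a digraph. -/
def arcWeight (A : V → V → Prop) [DecidableRel A] (u v : V) : ℝ := if A u v then 1 else 0

lemma exists_stars_compl {A : V → V → Prop} [DecidableRel A] (hA : ∀ v, ¬ A v v) (X : Finset V)
    {K : ℝ} (hK : 0 < K) :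
    ∃ c : V → V, (∀ v, c (c v) = c v) ∧ (∀ v ∈ X, c v = v) ∧ (∀ v ∈ Xᶜ, c v ∈ Xᶜ) ∧
      (∀ u v, c u ≠ u → c v ≠ v → c u = c v → arcWeight A u v = 0) ∧
      (∀ u, c u ≠ u → totalDeg (arcWeight A) u ≤ K ∧
        1 ≤ arcWeight A u (c u) + arcWeight A (c u) u) ∧
      ∑ v ∈ Xᶜ, min (outTo (arcWeight A) Xᶜ v) 3 ≤
        7 * (∑ v ∈ Xᶜ, (arcWeight A v (c v) + arcWeight A (c v) v) +
          4 / K * ∑ u, ∑ v, arcWeight A u v) := by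
  have ha : ∀ u v, 0 ≤ arcWeight A u v := fun u v => by
    rw [arcWeight]
    split_ifs <;> norm_num
  have ha1 : ∀ u v, arcWeight A u v ≤ 1 := fun u v => by
    rw [arcWeight]
    split_ifs <;> norm_num
  obtain ⟨c, hcc, hlink, hleaf, hsum⟩ :=
    exists_stars (E := fun u v => A u v ∧ u ∉ X ∧ v ∉ X) fun v h => hA v h.1
  have hlink' : ∀ v, c v ≠ v → (A v (c v) ∨ A (c v) v) ∧ v ∉ X ∧ c v ∉ X := fun v hv => by
    have := hlink v hv
    simp only [Linked] at this
    tauto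
  refine ⟨fun v => if K < totalDeg (arcWeight A) v then v else c v, ?_, ?_, ?_, ?_, ?_, ?_⟩
  · intro v
    by_cases h : K < totalDeg (arcWeight A) v
    · simp [h]
    · simp [h, hcc]
  · intro v hv
    by_contra h
    exact (hlink' v fun h' => h (by simp [h'])).2.1 hv
  · intro v hv
    rw [mem_compl] at hv ⊢
    dsimp only
    split_ifs
    · exact hv
    · by_cases h : c v = v
      · rwa [h]
      · exact (hlink' v h).2.2
  · intro u v hu hv huv
    by_cases h₁ : K < totalDeg (arcWeight A) u
    · simp [h₁] at hu
    by_cases h₂ : K < totalDeg (arcWeight A) v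
    · simp [h₂] at hv
    simp only [h₁, h₂, if_false] at hu hv huv
    have := hleaf u v hu hv huv
    refine if_neg fun hA' => this (Or.inl ⟨hA', (hlink' u hu).2.1, (hlink' v hv).2.1⟩)
  · intro u hu
    by_cases h₁ : K < totalDeg (arcWeight A) u
    · simp [h₁] at hu
    simp only [h₁, if_false] at hu ⊢
    refine ⟨not_lt.1 h₁, ?_⟩
    rcases (hlink' u hu).1 with h | h
    · have : arcWeight A u (c u) = 1 := if_pos h
      linarith [ha (c u) u]
    · have : arcWeight A (c u) u = 1 := if_pos h
      linarith [ha u (c u)]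
  · set c' := fun v => if K < totalDeg (arcWeight A) v then v else c v with hc'
    have h1 : ∑ v ∈ Xᶜ, min (outTo (arcWeight A) Xᶜ v) 3 ≤
        ((∑ v, outTrunc (fun u v => A u v ∧ u ∉ X ∧ v ∉ X) v : ℕ) : ℝ) := by
      push_cast
      refine le_trans (Finset.sum_le_sum fun v hv => ?_)
        (Finset.sum_le_sum_of_subset_of_nonneg (subset_univ Xᶜ) fun v _ _ => Nat.cast_nonneg _)
      rw [outTrunc]
      push_cast
      refine min_le_min (le_of_eq ?_) le_rfl
      simp only [outTo, arcWeight, Finset.sum_boole]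
      congr 2
      ext u
      simp [mem_compl.1 hv, and_comm]
    have h2 : ((∑ v, arcCount (fun u v => A u v ∧ u ∉ X ∧ v ∉ X) v (c v) : ℕ) : ℝ) ≤
        ∑ v ∈ Xᶜ, (arcWeight A v (c' v) + arcWeight A (c' v) v) +
          ∑ v, if K < totalDeg (arcWeight A) v then (2 : ℝ) else 0 := by
      push_cast
      rw [← Finset.sum_add_sum_compl X, Finset.sum_eq_zero (s := X), zero_add]
      · refine (Finset.sum_le_sum (g := fun v => arcWeight A v (c' v) + arcWeight A (c' v) v +
          if K < totalDeg (arcWeight A) v then (2 : ℝ) else 0) fun v hv => ?_).trans ?_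
        · have h5 : ∀ w, ((arcCount (fun u v => A u v ∧ u ∉ X ∧ v ∉ X) v w : ℕ) : ℝ) ≤
              arcWeight A v w + arcWeight A w v := fun w => by
            simp only [arcCount, arcWeight]
            push_cast
            gcongr <;> split_ifs <;> first | tauto | norm_num
          refine (h5 (c v)).trans ?_
          simp only [hc']
          split_ifs
          · linarith [ha1 v (c v), ha1 (c v) v, ha v v]
          · linarith
        · rw [Finset.sum_add_distrib]
          refine add_le_add le_rfl (Finset.sum_le_sum_of_subset_of_nonneg (subset_univ _) ?_)
          intro v _ _
          split_ifs <;> norm_num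
      · intro v hv
        simp [arcCount, hv]
    have h3 : ∑ v, (if K < totalDeg (arcWeight A) v then (2 : ℝ) else 0) ≤
        4 / K * ∑ u, ∑ v, arcWeight A u v := by
      have := card_mul_le_of_totalDeg ha (Q := univ.filter fun v => K < totalDeg (arcWeight A) v)
        (t := K) fun v hv => (mem_filter.1 hv).2.le
      rw [← Finset.sum_filter, Finset.sum_const, nsmul_eq_mul, div_mul_eq_mul_div,
        le_div_iff₀ hK]
      linarith
    have h4 : ((∑ v, outTrunc (fun u v => A u v ∧ u ∉ X ∧ v ∉ X) v : ℕ) : ℝ) ≤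
        7 * ((∑ v, arcCount (fun u v => A u v ∧ u ∉ X ∧ v ∉ X) v (c v) : ℕ) : ℝ) := by
      exact_mod_cast hsum
    linarith

lemma dArcs_eq_sum (A : V → V → Prop) [DecidableRel A] (S T : Finset V) :
    (dArcs A S T : ℝ) = ∑ u ∈ S, ∑ v ∈ T, arcWeight A u v := by
  rw [← Finset.sum_product' S T]
  simp only [dArcs, arcWeight, Finset.sum_boole]

lemma exists_balanced_cut {A : V → V → Prop} [DecidableRel A] (hA : ∀ v, ¬ A v v)
    (hout : ∀ v, 4 ≤ ∑ x, arcWeight A v x) {ε δ m : ℝ} (hε : 0 < ε) (hδ : 0 < δ)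
    (hδε : 64 * (1 + 4 / ε) * δ ≤ ε ^ 2) (hm : m = ∑ u, ∑ v, arcWeight A u v) (hm0 : 0 < m)
    (hmδ : (2 / δ) ^ 2 ≤ ε / 4 * m) :
    ∃ S : Finset V, (3 / 14 - ε) * m ≤ cutWeight (arcWeight A) S ∧
      (3 / 14 - ε) * m ≤ cutWeight (fun u v => arcWeight A v u) S := by
  have ha : ∀ u v, 0 ≤ arcWeight A u v ∧ arcWeight A u v ≤ 1 := fun u v => by
    rw [arcWeight]
    split_ifs <;> norm_num
  have ha0 : ∀ v, arcWeight A v v = 0 := fun v => if_neg (hA v)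
  have hK : 0 < 4 / ε := by positivity
  have hstars := fun X => exists_stars_compl hA X hK
  rw [← hm] at hstars
  generalize arcWeight A = a at *
  have ha' : ∀ u v, 0 ≤ a u v := fun u v => (ha u v).1
  obtain ⟨X, hX⟩ : ∃ X : Finset V, X = univ.filter fun v => δ * m < totalDeg a v := ⟨_, rfl⟩
  have hdX : ∀ v ∈ Xᶜ, totalDeg a v ≤ δ * m := fun v hv => by
    rw [hX, mem_compl, mem_filter, not_and] at hv
    exact not_lt.1 (hv (mem_univ v))
  have hXX : ∑ u ∈ X, ∑ v ∈ X, a u v ≤ ε / 4 * m := by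
    have h1 := card_mul_le_of_totalDeg ha' (Q := X) (t := δ * m) fun v hv => by
      rw [hX, mem_filter] at hv
      exact hv.2.le
    rw [← hm] at h1
    have h2 : (X.card : ℝ) ≤ 2 / δ := by
      rw [le_div_iff₀ hδ]
      nlinarith
    refine le_trans ?_ ((pow_le_pow_left₀ (Nat.cast_nonneg _) h2 2).trans hmδ)
    refine (Finset.sum_le_sum fun u _ => Finset.sum_le_sum fun v _ => (ha u v).2).trans ?_
    simp [sq]
  have hsplit : m = ∑ u ∈ X, ∑ v ∈ X, a u v + (∑ x ∈ X, (outTo a Xᶜ x + inFrom a Xᶜ x) +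
      ∑ v ∈ Xᶜ, outTo a Xᶜ v) := by
    rw [hm, sum_sum_eq_sum_blocks a X, add_assoc]
    simp only [outTo, inFrom, Finset.sum_add_distrib]
  have hswap : ∑ v ∈ Xᶜ, inFrom a Xᶜ v = ∑ v ∈ Xᶜ, outTo a Xᶜ v := Finset.sum_comm
  have round : ∀ (c : V → V) (x : V → ℝ), (∀ v, 0 ≤ x v ∧ x v ≤ 1) →
      (∀ v, v ∉ Xᶜ → x v = 0 ∨ x v = 1) →
      (∀ u, c u ≠ u → totalDeg a u ≤ 4 / ε ∧ 1 ≤ a u (c u) + a (c u) u) →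
      ∃ S : Finset V, expCut a c x - ε / 4 * m ≤ cutWeight a S ∧
        expCut (fun u v => a v u) c x - ε / 4 * m ≤ cutWeight (fun u v => a v u) S := by
    intro c x hx hxX hc
    refine exists_cut_near_expCut ha' c Xᶜ hx hxX (Δ := (1 + 4 / ε) * (δ * m)) (fun i hi => ?_)
      (by positivity) (by positivity) ?_
    · exact (blockWeight_le ha' hK.le hc i).trans
        (mul_le_mul_of_nonneg_left (hdX i hi) (by positivity))
    · rw [← hm]
      nlinarith [mul_le_mul_of_nonneg_right hδε (sq_nonneg m)]
  have hε4 : 0 < ε / 4 * m := by positivity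
  obtain ⟨m', hm'⟩ : ∃ m', m' = ∑ x ∈ X, (outTo a Xᶜ x + inFrom a Xᶜ x) +
    ∑ v ∈ Xᶜ, outTo a Xᶜ v := ⟨_, rfl⟩
  rw [← hm'] at hsplit
  rcases exists_signSum_le_or_biasedCut ha X hout rfl hm' with ⟨S, hS⟩ | ⟨T, p, hp0, hp1, h1, h2⟩
  · obtain ⟨c, hcc, hcX, hcB, hleaf, hcK, hgain⟩ := hstars X
    have hlossK : 4 / (4 / ε) * m = ε * m := by field_simp
    rw [hlossK] at hgain
    obtain ⟨R, hR₁, hR₂⟩ := round c (fun v => if v ∈ X then (if v ∈ S then 1 else 0) else 1 / 2)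
      (fun v => by split_ifs <;> norm_num)
      (fun v hv => by
        rw [mem_compl, not_not] at hv
        simp only [hv, if_true]
        split_ifs <;> simp) hcK
    have e₁ := star_le_expCut ha' ha0 X S hcc hcX hcB hleaf
    have e₂ : (∑ x ∈ X, (inFrom a Xᶜ x + outTo a Xᶜ x) + ∑ v ∈ Xᶜ, inFrom a Xᶜ v +
        signSum X (fun x => inFrom a Xᶜ x - outTo a Xᶜ x) S +
        ∑ v ∈ Xᶜ, (a (c v) v + a v (c v))) / 4 ≤ _ :=
      star_le_expCut (a := fun u v => a v u) (fun u v => ha' v u) ha0 X S hcc hcX hcB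
        fun u v hu hv huv => hleaf v u hv hu huv.symm
    have hneg : signSum X (fun x => inFrom a Xᶜ x - outTo a Xᶜ x) S =
        -signSum X (fun x => outTo a Xᶜ x - inFrom a Xᶜ x) S := by
      rw [signSum, signSum, ← Finset.sum_neg_distrib]
      refine Finset.sum_congr rfl fun x _ => ?_
      split_ifs <;> ring
    simp only [add_comm (inFrom a Xᶜ _), add_comm (a (c _) _)] at e₂
    rw [hneg, hswap, ← hm'] at e₂
    rw [← hm'] at e₁
    have habs := abs_le.1 (le_refl |signSum X (fun x => outTo a Xᶜ x - inFrom a Xᶜ x) S|)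
    refine ⟨R, ?_, ?_⟩ <;> linarith [habs.1, habs.2]
  · obtain ⟨R, hR₁, hR₂⟩ := round id (fun v => if v ∈ X then (if v ∈ T then 0 else 1) else p)
      (fun v => by split_ifs <;> constructor <;> linarith)
      (fun v hv => by
        rw [mem_compl, not_not] at hv
        simp only [hv, if_true]
        split_ifs <;> simp) (fun u hu => absurd rfl hu)
    have e₁ := biasedCut_add_le_expCut ha' ha0 X T hp0 hp1
    have e₂ : biasedCut (inFrom a Xᶜ) (outTo a Xᶜ) X T p +
        p * (1 - p) * ∑ v ∈ Xᶜ, inFrom a Xᶜ v ≤ _ :=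
      biasedCut_add_le_expCut (a := fun u v => a v u) (fun u v => ha' v u) ha0 X T hp0 hp1
    rw [hswap] at e₂
    refine ⟨R, ?_, ?_⟩ <;> linarith

end Placement

/-- For every real `ε > 0` there exists `m₀` such that every digraph with `m ≥ m₀` arcs and
minimum outdegree at least 4 admits a bipartition `V₁, V₂` with
`min{e(V₁,V₂), e(V₂,V₁)} ≥ (3/14 − ε)·m`. -/
theorem stmt0 (ε : ℝ) (hε : 0 < ε) :
    ∃ m₀ : ℕ, ∀ (V : Type) [Fintype V] [DecidableEq V] (A : V → V → Prop) [DecidableRel A],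
      (∀ v, ¬ A v v) →
      m₀ ≤ dArcs A Finset.univ Finset.univ →
      (∀ x, 4 ≤ outDeg A x) →
      ∃ V₁ V₂ : Finset V, V₁ ∪ V₂ = Finset.univ ∧ Disjoint V₁ V₂ ∧
        (3 / 14 - ε) * (dArcs A Finset.univ Finset.univ : ℝ) ≤
          min (dArcs A V₁ V₂ : ℝ) (dArcs A V₂ V₁ : ℝ) := by
  have hK : 0 < 1 + 4 / ε := by positivity
  obtain ⟨δ, hδ, hδε⟩ : ∃ δ : ℝ, 0 < δ ∧ 64 * (1 + 4 / ε) * δ ≤ ε ^ 2 :=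
    ⟨ε ^ 2 / (64 * (1 + 4 / ε)), by positivity, (mul_div_cancel₀ _ (by positivity)).le⟩
  refine ⟨⌈4 / ε * (2 / δ) ^ 2⌉₊ + 1, fun V _ _ A _ hA hm hout => ?_⟩
  have hm' : 4 / ε * (2 / δ) ^ 2 + 1 ≤ (dArcs A univ univ : ℝ) :=
    (add_le_add_left (Nat.le_ceil _) 1).trans (by exact_mod_cast hm)
  have hpos : 0 ≤ 4 / ε * (2 / δ) ^ 2 := by positivity
  obtain ⟨S, h₁, h₂⟩ := exists_balanced_cut hA (fun v => by
      have : (4 : ℝ) ≤ outDeg A v := by exact_mod_cast hout v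
      simpa only [outDeg, arcWeight, Finset.sum_boole] using this)
    hε hδ hδε (dArcs_eq_sum A univ univ) (by linarith) (by
      have : (2 / δ) ^ 2 = ε / 4 * (4 / ε * (2 / δ) ^ 2) := by
        field_simp
      rw [this]
      exact mul_le_mul_of_nonneg_left (by linarith) (by positivity))
  refine ⟨S, Sᶜ, union_compl S, disjoint_compl_right, le_min ?_ ?_⟩
  · rw [dArcs_eq_sum A S]
    exact h₁
  · rw [dArcs_eq_sum A Sᶜ, Finset.sum_comm]
    exact h₂
end

section
/- Let D be a digraph with m arcs, let p be a real with 0 ≤ p ≤ 1, and let ε > 0. Suppose X ⊆ V(D) with a given partition X = X₁ ∪ X₂, let Y = V(D) ∖ X, and suppose every y ∈ Y satisfies d(y) ≤ ε²m/4. Then there exists a bipartition V(D) = V₁ ∪ V₂ with Xᵢ ⊆ Vᵢ for i = 1,2 such that e(V₁,V₂) ≥ e(X₁,X₂) + (1−p)·e(X₁,Y) + p·e(Y,X₂) + p(1−p)·e(Y) − εm and e(V₂,V₁) ≥ e(X₂,X₁) + p·e(X₂,Y) + (1−p)·e(Y,X₁) + p(1−p)·e(Y) − εm. -/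
open Finset

/-- The bilinear form of the adjacency matrix of `A`. -/
noncomputable def arcForm {V : Type} [Fintype V] (A : V → V → Prop) [DecidableRel A]
    (f g : V → ℝ) : ℝ :=
  ∑ u, ∑ v, if A u v then f u * g v else 0

section

variable {V : Type} [Fintype V] (A : V → V → Prop) [DecidableRel A]

theorem outDeg_eq_sum (x : V) : (outDeg A x : ℝ) = ∑ y, if A x y then (1 : ℝ) else 0 := by
  simp [outDeg]

theorem inDeg_eq_sum (x : V) : (inDeg A x : ℝ) = ∑ y, if A y x then (1 : ℝ) else 0 := by
  simp [inDeg]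

theorem arcForm_add_smul (f f' g g' : V → ℝ) (s t : ℝ) :
    arcForm A (fun v => f v + s * f' v) (fun v => g v + t * g' v) =
      arcForm A f g + t * arcForm A f g' + s * arcForm A f' g + s * t * arcForm A f' g' := by
  simp only [arcForm, mul_sum, ← sum_add_distrib]
  refine sum_congr rfl fun u _ => sum_congr rfl fun v _ => ?_
  split_ifs <;> ring

variable [DecidableEq V]

theorem dArcs_eq_arcForm (S T : Finset V) :
    (dArcs A S T : ℝ) =
      arcForm A (fun v => if v ∈ S then 1 else 0) (fun v => if v ∈ T then 1 else 0) := by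
  have hset : (S ×ˢ T).filter (fun q => A q.1 q.2) =
      (univ ×ˢ univ).filter (fun q : V × V => A q.1 q.2 ∧ q.1 ∈ S ∧ q.2 ∈ T) := by
    ext q
    simp [and_comm]
  rw [dArcs, hset, card_filter, sum_product]
  push_cast
  refine sum_congr rfl fun u _ => sum_congr rfl fun v _ => ?_
  by_cases hA : A u v <;> by_cases hu : u ∈ S <;> by_cases hv : v ∈ T <;> simp [hA, hu, hv]

theorem sum_deg_eq : ∑ x, (deg A x : ℝ) = 2 * (dArcs A univ univ : ℝ) := by
  have hcomm : ∑ x, (inDeg A x : ℝ) = ∑ x, (outDeg A x : ℝ) := by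
    simp only [inDeg_eq_sum, outDeg_eq_sum]
    exact sum_comm
  have hout : (dArcs A univ univ : ℝ) = ∑ x, (outDeg A x : ℝ) := by
    simp [dArcs_eq_arcForm, arcForm, outDeg_eq_sum]
  simp only [deg, Nat.cast_add, sum_add_distrib, hcomm, hout]
  ring

/-- Without loops, `x ↦ arcForm A x (1 - x)` is affine in each coordinate, and on the unit cube its
slope in the direction of `y` is at most the degree of `y`. -/
theorem exists_slope_arcForm_update (hirr : ∀ v, ¬ A v v) (x : V → ℝ)
    (hx : ∀ v, 0 ≤ x v ∧ x v ≤ 1) (y : V) :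
    ∃ c : ℝ, |c| ≤ deg A y ∧ ∀ t : ℝ,
      arcForm A (Function.update x y t) (fun v => 1 - Function.update x y t v) =
        arcForm A x (fun v => 1 - x v) + (t - x y) * c := by
  have hout : ∑ v, (if A y v then 1 - x v else 0) ≤ (outDeg A y : ℝ) := by
    rw [outDeg_eq_sum]
    refine sum_le_sum fun v _ => ?_
    split_ifs <;> linarith [(hx v).1]
  have hout0 : 0 ≤ ∑ v, (if A y v then 1 - x v else 0) := by
    refine sum_nonneg fun v _ => ?_
    split_ifs <;> linarith [(hx v).2]
  have hin : ∑ u, (if A u y then x u else 0) ≤ (inDeg A y : ℝ) := by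
    rw [inDeg_eq_sum]
    refine sum_le_sum fun v _ => ?_
    split_ifs <;> linarith [(hx v).2]
  have hin0 : 0 ≤ ∑ u, (if A u y then x u else 0) := by
    refine sum_nonneg fun v _ => ?_
    split_ifs <;> linarith [(hx v).1]
  refine ⟨∑ v, (if A y v then 1 - x v else 0) - ∑ u, (if A u y then x u else 0), ?_, ?_⟩
  · rw [deg, Nat.cast_add, abs_le]
    constructor <;> linarith
  · intro t
    have hterm : ∀ u v,
        (if A u v then Function.update x y t u * (1 - Function.update x y t v) else 0) =
          (if A u v then x u * (1 - x v) else 0) + (t - x y) *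
            ((if u = y then if A y v then 1 - x v else 0 else 0) -
              (if v = y then if A u y then x u else 0 else 0)) := by
      intro u v
      by_cases hu : u = y
      · subst hu
        by_cases hv : v = u
        · subst hv
          simp [hirr]
        · by_cases hA : A u v <;> simp [hA, hv]
          ring
      · by_cases hv : v = y
        · subst hv
          by_cases hA : A u v <;> simp [hA, hu]
          ring
        · simp [hu, hv]
    have hrow : ∑ u, ∑ v, (if u = y then if A y v then 1 - x v else 0 else 0) =
        ∑ v, (if A y v then 1 - x v else 0) := by
      rw [sum_comm]
      simp
    have hcol : ∑ u, ∑ v, (if v = y then if A u y then x u else 0 else 0) =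
        ∑ u, (if A u y then x u else 0) := by
      simp
    simp only [arcForm, hterm, sum_add_distrib, ← mul_sum, sum_sub_distrib, hrow, hcol]

/-- One coordinate can be rounded to `0` or `1` at a cost of `deg A y ^ 2 / 2` in the squared
distance of the two arc counts from any targets. -/
theorem exists_round_coordinate (hirr : ∀ v, ¬ A v v) (a b : ℝ) (x : V → ℝ)
    (hx : ∀ v, 0 ≤ x v ∧ x v ≤ 1) (y : V) :
    ∃ t : ℝ, (t = 0 ∨ t = 1) ∧
      (arcForm A (Function.update x y t) (fun v => 1 - Function.update x y t v) - a) ^ 2 +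
        (arcForm A (fun v => 1 - Function.update x y t v) (Function.update x y t) - b) ^ 2 ≤
      (arcForm A x (fun v => 1 - x v) - a) ^ 2 + (arcForm A (fun v => 1 - x v) x - b) ^ 2 +
        (deg A y : ℝ) ^ 2 / 2 := by
  obtain ⟨c, hc, hF⟩ := exists_slope_arcForm_update A hirr x hx y
  obtain ⟨c', hc', hG⟩ := exists_slope_arcForm_update A hirr (fun v => 1 - x v)
    (fun v => ⟨by linarith [(hx v).2], by linarith [(hx v).1]⟩) y
  have hupd : ∀ t : ℝ, Function.update (fun v => 1 - x v) y (1 - t) =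
      fun v => 1 - Function.update x y t v := by
    intro t
    ext v
    by_cases hv : v = y
    · subst hv; simp
    · simp [hv]
  have hG' : ∀ t : ℝ, arcForm A (fun v => 1 - Function.update x y t v) (Function.update x y t) =
      arcForm A (fun v => 1 - x v) x - (t - x y) * c' := by
    intro t
    have h := hG (1 - t)
    rw [hupd] at h
    simp only [sub_sub_cancel] at h
    rw [h]
    ring
  simp only [hF, hG']
  have hcd : c ^ 2 ≤ (deg A y : ℝ) ^ 2 := sq_le_sq' (abs_le.1 hc).1 (abs_le.1 hc).2
  have hcd' : c' ^ 2 ≤ (deg A y : ℝ) ^ 2 := sq_le_sq' (abs_le.1 hc').1 (abs_le.1 hc').2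
  obtain ⟨h0, h1⟩ := hx y
  generalize x y = q at *
  generalize arcForm A x (fun v => 1 - x v) = f
  generalize arcForm A (fun v => 1 - x v) x = g
  have hvar : q * (1 - q) * (c ^ 2 + c' ^ 2) ≤ (deg A y : ℝ) ^ 2 / 2 := by
    have hq : q * (1 - q) ≤ 1 / 4 := by nlinarith [sq_nonneg (q - 1 / 2)]
    have hmul := mul_le_mul_of_nonneg_right hq (by positivity : 0 ≤ c ^ 2 + c' ^ 2)
    linarith
  by_contra hcon
  push Not at hcon
  have hz := hcon 0 (Or.inl rfl)
  have ho := hcon 1 (Or.inr rfl)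
  rcases h0.eq_or_lt with h | h
  · subst h
    nlinarith
  · have h2 := mul_lt_mul_of_pos_left ho h
    have h3 := mul_le_mul_of_nonneg_left hz.le (sub_nonneg.2 h1)
    nlinarith

theorem exists_round_coordinates (hirr : ∀ v, ¬ A v v) (a b : ℝ) (x : V → ℝ)
    (hx : ∀ v, 0 ≤ x v ∧ x v ≤ 1) (Y : Finset V) :
    ∃ z : V → ℝ, (∀ v, 0 ≤ z v ∧ z v ≤ 1) ∧ (∀ v ∉ Y, z v = x v) ∧
      (∀ v ∈ Y, z v = 0 ∨ z v = 1) ∧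
      (arcForm A z (fun v => 1 - z v) - a) ^ 2 + (arcForm A (fun v => 1 - z v) z - b) ^ 2 ≤
      (arcForm A x (fun v => 1 - x v) - a) ^ 2 + (arcForm A (fun v => 1 - x v) x - b) ^ 2 +
        ∑ y ∈ Y, (deg A y : ℝ) ^ 2 / 2 := by
  induction Y using Finset.induction_on with
  | empty => exact ⟨x, hx, fun _ _ => rfl, by simp, by simp⟩
  | insert y Y hy ih =>
    obtain ⟨z, hz, hzx, hzY, hle⟩ := ih
    obtain ⟨t, ht, hle'⟩ := exists_round_coordinate A hirr a b z hz y
    refine ⟨Function.update z y t, fun v => ?_, fun v hv => ?_, fun v hv => ?_, ?_⟩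
    · by_cases hv : v = y
      · subst hv
        rcases ht with rfl | rfl <;> simp
      · simpa [hv] using hz v
    · rw [mem_insert, not_or] at hv
      simpa [hv.1] using hzx v hv.2
    · by_cases hvy : v = y
      · subst hvy
        simpa using ht
      · simpa [hvy] using hzY v ((mem_insert.1 hv).resolve_left hvy)
    · rw [sum_insert hy]
      linarith

end

/-- Lemma 2.1 (Lee–Loh–Sudakov): extending a partial partition. -/
theorem stmt1 {V : Type} [Fintype V] [DecidableEq V] (A : V → V → Prop) [DecidableRel A]
    (hirr : ∀ v, ¬ A v v)
    (m : ℕ) (hm : m = dArcs A Finset.univ Finset.univ)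
    (p ε : ℝ) (hp0 : 0 ≤ p) (hp1 : p ≤ 1) (hε : 0 < ε)
    (X X₁ X₂ : Finset V) (hX : X₁ ∪ X₂ = X) (hdisj : Disjoint X₁ X₂)
    (Y : Finset V) (hY : Y = Xᶜ)
    (hdeg : ∀ y ∈ Y, (deg A y : ℝ) ≤ ε ^ 2 * m / 4) :
    ∃ V₁ V₂ : Finset V, V₁ ∪ V₂ = Finset.univ ∧ Disjoint V₁ V₂ ∧
      X₁ ⊆ V₁ ∧ X₂ ⊆ V₂ ∧
      (dArcs A X₁ X₂ : ℝ) + (1 - p) * (dArcs A X₁ Y : ℝ) + p * (dArcs A Y X₂ : ℝ)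
          + p * (1 - p) * (dArcs A Y Y : ℝ) - ε * m ≤ (dArcs A V₁ V₂ : ℝ) ∧
      (dArcs A X₂ X₁ : ℝ) + p * (dArcs A X₂ Y : ℝ) + (1 - p) * (dArcs A Y X₁ : ℝ)
          + p * (1 - p) * (dArcs A Y Y : ℝ) - ε * m ≤ (dArcs A V₂ V₁ : ℝ) := by
  set x : V → ℝ := fun v => (if v ∈ X₁ then 1 else 0) + p * (if v ∈ Y then 1 else 0) with hxdef
  have hmemY : ∀ v, v ∈ Y ↔ v ∉ X₁ ∧ v ∉ X₂ := by
    intro v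
    rw [hY, ← hX]
    simp
  have hnot : ∀ v ∈ X₁, v ∉ X₂ := fun v h1 h2 => disjoint_left.1 hdisj h1 h2
  have hxc : (fun v => 1 - x v) =
      fun v => (if v ∈ X₂ then 1 else 0) + (1 - p) * (if v ∈ Y then 1 else 0) := by
    ext v
    simp only [hxdef, hmemY]
    by_cases h1 : v ∈ X₁
    · simp [h1, hnot v h1]
    · by_cases h2 : v ∈ X₂ <;> simp [h1, h2]
  have hx : ∀ v, 0 ≤ x v ∧ x v ≤ 1 := by
    intro v
    simp only [hxdef, hmemY]
    by_cases h1 : v ∈ X₁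
    · simp [h1]
    · by_cases h2 : v ∈ X₂ <;> simp [h1, h2, hp0, hp1]
  have hμ : arcForm A x (fun v => 1 - x v) = (dArcs A X₁ X₂ : ℝ) + (1 - p) * (dArcs A X₁ Y : ℝ)
      + p * (dArcs A Y X₂ : ℝ) + p * (1 - p) * (dArcs A Y Y : ℝ) := by
    rw [hxc, hxdef, arcForm_add_smul]
    simp only [dArcs_eq_arcForm]
  have hν : arcForm A (fun v => 1 - x v) x = (dArcs A X₂ X₁ : ℝ) + p * (dArcs A X₂ Y : ℝ)
      + (1 - p) * (dArcs A Y X₁ : ℝ) + p * (1 - p) * (dArcs A Y Y : ℝ) := by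
    rw [hxc, hxdef, arcForm_add_smul]
    simp only [dArcs_eq_arcForm]
    ring
  obtain ⟨z, -, hzx, hzY, hle⟩ := exists_round_coordinates A hirr
    (arcForm A x (fun v => 1 - x v)) (arcForm A (fun v => 1 - x v) x) x hx Y
  have hz1 : ∀ v ∈ X₁, z v = 1 := by
    intro v h1
    have hv : v ∉ Y := fun h => ((hmemY v).1 h).1 h1
    rw [hzx v hv]
    simp [hxdef, h1, hv]
  have hz2 : ∀ v ∈ X₂, z v = 0 := by
    intro v h2
    have hv : v ∉ Y := fun h => ((hmemY v).1 h).2 h2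
    have h1 : v ∉ X₁ := fun h1 => hnot v h1 h2
    rw [hzx v hv]
    simp [hxdef, h1, hv]
  have hz01 : ∀ v, z v = 0 ∨ z v = 1 := by
    intro v
    by_cases h1 : v ∈ X₁
    · exact Or.inr (hz1 v h1)
    · by_cases h2 : v ∈ X₂
      · exact Or.inl (hz2 v h2)
      · exact hzY v ((hmemY v).2 ⟨h1, h2⟩)
  have hind : (fun v => if v ∈ univ.filter (fun v => z v = 1) then (1 : ℝ) else 0) = z := by
    ext v
    rcases hz01 v with h | h <;> simp [h]
  have hind' : (fun v => if v ∈ (univ.filter (fun v => z v = 1))ᶜ then (1 : ℝ) else 0) =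
      fun v => 1 - z v := by
    ext v
    rcases hz01 v with h | h <;> simp [h]
  have hsum : ∑ y ∈ Y, (deg A y : ℝ) ^ 2 / 2 ≤ (ε * m) ^ 2 := by
    have hdegY : ∑ y ∈ Y, (deg A y : ℝ) ≤ 2 * m := by
      rw [hm, ← sum_deg_eq]
      exact sum_le_sum_of_subset_of_nonneg (subset_univ _) fun _ _ _ => Nat.cast_nonneg _
    calc ∑ y ∈ Y, (deg A y : ℝ) ^ 2 / 2
        ≤ ∑ y ∈ Y, ε ^ 2 * m / 8 * (deg A y : ℝ) := by
          refine sum_le_sum fun y hy => ?_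
          nlinarith [mul_le_mul_of_nonneg_right (hdeg y hy) (Nat.cast_nonneg (α := ℝ) (deg A y))]
      _ = ε ^ 2 * m / 8 * ∑ y ∈ Y, (deg A y : ℝ) := by rw [mul_sum]
      _ ≤ ε ^ 2 * m / 8 * (2 * m) := by gcongr
      _ ≤ (ε * m) ^ 2 := by nlinarith [sq_nonneg (ε * m)]
  have hεm : 0 ≤ ε * m := by positivity
  rw [sub_self, sub_self] at hle
  refine ⟨univ.filter (fun v => z v = 1), (univ.filter (fun v => z v = 1))ᶜ, union_compl _,
    disjoint_compl_right, fun v hv => by simp [hz1 v hv], fun v hv => by simp [hz2 v hv], ?_, ?_⟩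
  · rw [← hμ, dArcs_eq_arcForm A (univ.filter _), hind, hind']
    have habs := abs_le_of_sq_le_sq' (a := arcForm A z (fun v => 1 - z v) -
      arcForm A x (fun v => 1 - x v)) (b := ε * m) (by nlinarith) hεm
    linarith [habs.1]
  · rw [← hν, dArcs_eq_arcForm A _ (univ.filter _), hind, hind']
    have habs := abs_le_of_sq_le_sq' (a := arcForm A (fun v => 1 - z v) z -
      arcForm A (fun v => 1 - x v) x) (b := ε * m) (by nlinarith) hεm
    linarith [habs.1]
end

section
/- Let D be a digraph with n vertices and m arcs, and let ε > 0. If m ≥ 8n/ε² or the maximum degree Δ(D) = max_{x∈V(D)} d(x) satisfies Δ(D) ≤ ε²m/4, then D admits a bipartition V(D) = V₁ ∪ V₂ with min{e(V₁,V₂), e(V₂,V₁)} ≥ m/4 − εm. -/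
open Finset

/-- Some choice of signs makes a quadratic form at most the sum of its diagonal coefficients. -/
theorem exists_signs_quadratic_le_diag {V : Type} [DecidableEq V] (M : V → V → ℝ) (s : Finset V) :
    ∃ σ : V → ℝ, (∀ v, σ v = 1 ∨ σ v = -1) ∧
      ∑ u ∈ s, ∑ v ∈ s, M u v * (σ u * σ v) ≤ ∑ u ∈ s, M u u := by
  induction s using Finset.induction_on with
  | empty => exact ⟨fun _ => 1, fun _ => Or.inl rfl, by simp⟩
  | insert a s ha ih =>
    obtain ⟨σ, hσ, hle⟩ := ih
    have expand : ∀ t : ℝ, t * t = 1 →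
        ∑ u ∈ insert a s, ∑ v ∈ insert a s,
          M u v * (Function.update σ a t u * Function.update σ a t v) =
        M a a + t * (∑ v ∈ s, M a v * σ v + ∑ u ∈ s, M u a * σ u) +
          ∑ u ∈ s, ∑ v ∈ s, M u v * (σ u * σ v) := by
      intro t ht
      have hne : ∀ u ∈ s, Function.update σ a t u = σ u := fun u hu =>
        Function.update_of_ne (by rintro rfl; exact ha hu) _ _
      have row : ∑ v ∈ s, M a v * (t * Function.update σ a t v) = t * ∑ v ∈ s, M a v * σ v := by
        rw [Finset.mul_sum]
        exact Finset.sum_congr rfl fun v hv => by rw [hne v hv]; ring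
      have col : ∑ u ∈ s, M u a * (Function.update σ a t u * t) = t * ∑ u ∈ s, M u a * σ u := by
        rw [Finset.mul_sum]
        exact Finset.sum_congr rfl fun u hu => by rw [hne u hu]; ring
      have block : ∑ u ∈ s, ∑ v ∈ s,
          M u v * (Function.update σ a t u * Function.update σ a t v) =
          ∑ u ∈ s, ∑ v ∈ s, M u v * (σ u * σ v) :=
        Finset.sum_congr rfl fun u hu => Finset.sum_congr rfl fun v hv => by
          rw [hne u hu, hne v hv]
      simp only [Finset.sum_insert ha, Finset.sum_add_distrib, Function.update_self]
      rw [row, col, block, ht]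
      ring
    have signs : ∀ t : ℝ, t = 1 ∨ t = -1 →
        ∀ v, Function.update σ a t v = 1 ∨ Function.update σ a t v = -1 := by
      intro t ht v
      by_cases h : v = a
      · subst h; simpa using ht
      · simpa [Function.update_of_ne h] using hσ v
    rcases le_total (∑ v ∈ s, M a v * σ v + ∑ u ∈ s, M u a * σ u) 0 with h | h
    · refine ⟨Function.update σ a 1, signs 1 (Or.inl rfl), ?_⟩
      rw [expand 1 (by norm_num), Finset.sum_insert ha]
      linarith
    · refine ⟨Function.update σ a (-1), signs (-1) (Or.inr rfl), ?_⟩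
      rw [expand (-1) (by norm_num), Finset.sum_insert ha]
      linarith

theorem dArcs_cast_eq_sum {V : Type} [Fintype V] [DecidableEq V] (A : V → V → Prop)
    [DecidableRel A] (S T : Finset V) :
    (dArcs A S T : ℝ) = ∑ u ∈ S, ∑ v ∈ T, if A u v then 1 else 0 := by
  rw [dArcs, Finset.card_filter, Finset.sum_product]
  push_cast
  rfl

theorem dArcs_filter_cast_eq_sum {V : Type} [Fintype V] [DecidableEq V] (A : V → V → Prop)
    [DecidableRel A] (p q : V → Prop) [DecidablePred p] [DecidablePred q] (f g : V → ℝ)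
    (hf : ∀ v, f v = if p v then 1 else 0) (hg : ∀ v, g v = if q v then 1 else 0) :
    (dArcs A (Finset.univ.filter p) (Finset.univ.filter q) : ℝ) =
      ∑ u, ∑ v, (if A u v then 1 else 0) * (f u * g v) := by
  rw [dArcs_cast_eq_sum, Finset.sum_filter]
  refine Finset.sum_congr rfl fun u _ => ?_
  rw [Finset.sum_filter, hf]
  split_ifs with h
  · exact Finset.sum_congr rfl fun v _ => by rw [hg]; split_ifs <;> simp
  · simp

theorem outDeg_cast_eq_sum {V : Type} [Fintype V] (A : V → V → Prop) [DecidableRel A] (x : V) :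
    (outDeg A x : ℝ) = ∑ y, if A x y then 1 else 0 := by
  simp [outDeg]

theorem inDeg_cast_eq_sum {V : Type} [Fintype V] (A : V → V → Prop) [DecidableRel A] (x : V) :
    (inDeg A x : ℝ) = ∑ y, if A y x then 1 else 0 := by
  simp [inDeg]

theorem sum_deg_cast {V : Type} [Fintype V] [DecidableEq V] (A : V → V → Prop) [DecidableRel A] :
    ∑ x, (deg A x : ℝ) = 2 * dArcs A Finset.univ Finset.univ := by
  simp only [deg, Nat.cast_add, Finset.sum_add_distrib, outDeg_cast_eq_sum, inDeg_cast_eq_sum]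
  rw [dArcs_cast_eq_sum, Finset.sum_comm (f := fun x y => if A y x then (1 : ℝ) else 0)]
  ring

theorem deg_le_two_mul_card {V : Type} [Fintype V] (A : V → V → Prop) [DecidableRel A] (x : V) :
    deg A x ≤ 2 * Fintype.card V := by
  have h₁ : outDeg A x ≤ Fintype.card V := Finset.card_le_univ _
  have h₂ : inDeg A x ≤ Fintype.card V := Finset.card_le_univ _
  rw [deg]
  omega

/-- Arc counts across a bipartition given by signs: the two directions differ only in the sign of
the linear term. -/
theorem sum_arcs_signs {V : Type} [Fintype V] [DecidableEq V] (A : V → V → Prop) [DecidableRel A]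
    (σ : V → ℝ) (t : ℝ) (ht : t * t = 1) :
    ∑ u, ∑ v, (if A u v then (1 : ℝ) else 0) * ((1 + t * σ u) / 2 * ((1 - t * σ v) / 2)) =
      (dArcs A Finset.univ Finset.univ + t * ∑ u, σ u * ((outDeg A u : ℝ) - inDeg A u) -
        ∑ u, ∑ v, (if A u v then (1 : ℝ) else 0) * (σ u * σ v)) / 4 := by
  have hlin : ∑ u, σ u * ((outDeg A u : ℝ) - inDeg A u) =
      ∑ u, ∑ v, (if A u v then (1 : ℝ) else 0) * (σ u - σ v) := by
    simp only [mul_sub, Finset.sum_sub_distrib, outDeg_cast_eq_sum, inDeg_cast_eq_sum,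
      Finset.mul_sum]
    rw [Finset.sum_comm (f := fun x y => σ x * if A y x then (1 : ℝ) else 0)]
    simp only [mul_comm]
  rw [hlin, dArcs_cast_eq_sum]
  simp only [Finset.mul_sum, ← Finset.sum_add_distrib, ← Finset.sum_sub_distrib, Finset.sum_div]
  refine Finset.sum_congr rfl fun u _ => Finset.sum_congr rfl fun v _ => ?_
  linear_combination (-(if A u v then (1 : ℝ) else 0) * σ u * σ v / 4) * ht

/-- Corollary 2.2 (Lee–Loh–Sudakov). -/
theorem stmt2 {V : Type} [Fintype V] [DecidableEq V] (A : V → V → Prop) [DecidableRel A]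
    (hirr : ∀ v, ¬ A v v)
    (n m : ℕ) (hn : n = Fintype.card V) (hm : m = dArcs A Finset.univ Finset.univ)
    (ε : ℝ) (hε : 0 < ε)
    (hcond : 8 * (n : ℝ) / ε ^ 2 ≤ (m : ℝ) ∨ ∀ x, (deg A x : ℝ) ≤ ε ^ 2 * m / 4) :
    ∃ V₁ V₂ : Finset V, V₁ ∪ V₂ = Finset.univ ∧ Disjoint V₁ V₂ ∧
      (m : ℝ) / 4 - ε * m ≤ min (dArcs A V₁ V₂ : ℝ) (dArcs A V₂ V₁ : ℝ) := by
  have hdeg : ∀ x, (deg A x : ℝ) ≤ ε ^ 2 * m / 4 := by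
    rcases hcond with h | h
    · intro x
      have hx : (deg A x : ℝ) ≤ 2 * n := by
        rw [hn]; exact_mod_cast deg_le_two_mul_card A x
      rw [div_le_iff₀ (by positivity)] at h
      linarith
    · exact h
  rcases Nat.eq_zero_or_pos m with h0 | hpos
  · refine ⟨Finset.univ, ∅, by simp, by simp, ?_⟩
    simp [h0]
  have hm0 : (0 : ℝ) < m := by exact_mod_cast hpos
  have hc : 0 < ε * m := by positivity
  set s : V → ℝ := fun u => (outDeg A u : ℝ) - inDeg A u with hs
  obtain ⟨σ, hσ, hle⟩ := exists_signs_quadratic_le_diag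
    (fun u v => s u * s v / (2 * (ε * m)) + if A u v then (1 : ℝ) else 0) Finset.univ
  set L : ℝ := ∑ u, σ u * s u with hL
  set Q : ℝ := ∑ u, ∑ v, (if A u v then (1 : ℝ) else 0) * (σ u * σ v) with hQ
  have hquad : ∑ u, ∑ v, (s u * s v / (2 * (ε * m)) + if A u v then (1 : ℝ) else 0) *
      (σ u * σ v) = L ^ 2 / (2 * (ε * m)) + Q := by
    rw [hL, hQ, sq, Finset.sum_mul_sum]
    simp only [Finset.sum_div, ← Finset.sum_add_distrib]
    refine Finset.sum_congr rfl fun u _ => Finset.sum_congr rfl fun v _ => ?_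
    ring
  have hsq : ∑ u, s u ^ 2 ≤ ε ^ 2 * m / 4 * (2 * m) := by
    rw [hm, ← sum_deg_cast, ← hm, Finset.mul_sum]
    refine Finset.sum_le_sum fun u _ => ?_
    have hsd : s u ^ 2 ≤ (deg A u : ℝ) * deg A u := by
      have h₁ : (0 : ℝ) ≤ outDeg A u := Nat.cast_nonneg _
      have h₂ : (0 : ℝ) ≤ inDeg A u := Nat.cast_nonneg _
      simp only [hs, deg, Nat.cast_add]
      nlinarith [mul_nonneg h₁ h₂]
    exact hsd.trans (mul_le_mul_of_nonneg_right (hdeg u) (Nat.cast_nonneg _))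
  have hdiag : ∑ u, (s u * s u / (2 * (ε * m)) + if A u u then (1 : ℝ) else 0) ≤ ε * m / 4 := by
    simp only [hirr, if_false, add_zero, ← Finset.sum_div, ← sq]
    rw [div_le_iff₀ (by positivity)]
    linarith
  have hpot : L ^ 2 / (2 * (ε * m)) + Q ≤ ε * m / 4 := hquad ▸ hle.trans hdiag
  have habs : |L| ≤ L ^ 2 / (2 * (ε * m)) + ε * m / 2 := by
    have h : L ^ 2 / (2 * (ε * m)) + ε * m / 2 - |L| = (|L| - ε * m) ^ 2 / (2 * (ε * m)) := by
      rw [← sq_abs L]; field_simp; ring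
    have : 0 ≤ (|L| - ε * m) ^ 2 / (2 * (ε * m)) := by positivity
    linarith
  have hL₁ := le_abs_self L
  have hL₂ := neg_abs_le L
  have plus : ∀ v, (1 + σ v) / 2 = if σ v = 1 then 1 else 0 := by
    intro v
    rcases hσ v with h | h <;> rw [h] <;> norm_num
  have minus : ∀ v, (1 - σ v) / 2 = if ¬ σ v = 1 then 1 else 0 := by
    intro v
    rcases hσ v with h | h <;> rw [h] <;> norm_num
  have e₁ := sum_arcs_signs A σ 1 (by norm_num)
  have e₂ := sum_arcs_signs A σ (-1) (by norm_num)
  simp only [one_mul, neg_mul, sub_neg_eq_add, ← sub_eq_add_neg, ← hm] at e₁ e₂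
  refine ⟨Finset.univ.filter fun v => σ v = 1, Finset.univ.filter fun v => ¬ σ v = 1,
    Finset.filter_union_filter_not_eq _ _, Finset.disjoint_filter_filter_not _ _ _, le_min ?_ ?_⟩
  · rw [dArcs_filter_cast_eq_sum A _ _ _ _ plus minus, e₁]
    linarith
  · rw [dArcs_filter_cast_eq_sum A _ _ _ _ minus plus, e₂]
    linarith
end

section
/- Let D be a digraph and let V(D) = X ∪ Y be a partition with e(X) = 0. Let X = X₁ ∪ X₂ be a partition of X that minimizes |θ(X₁,X₂)| among all partitions of X. Then |θ(X₁,X₂)| ≤ |Y|. -/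
open Finset

/-- Integers of absolute value at most `c` can be split into two classes whose sums differ
by at most `c`. -/
theorem exists_partition_abs_sum_sub_sum_le {ι : Type*} [DecidableEq ι] (f : ι → ℤ) {c : ℤ}
    (hc : 0 ≤ c) (s : Finset ι) (hf : ∀ x ∈ s, |f x| ≤ c) :
    ∃ s₁ s₂ : Finset ι, s₁ ∪ s₂ = s ∧ Disjoint s₁ s₂ ∧
      |∑ x ∈ s₁, f x - ∑ x ∈ s₂, f x| ≤ c := by
  induction s using Finset.induction_on with
  | empty => exact ⟨∅, ∅, by simp [hc]⟩
  | insert a s ha ih =>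
    obtain ⟨s₁, s₂, rfl, hd, h⟩ := ih fun x hx => hf x (mem_insert_of_mem hx)
    have hfa := hf a (mem_insert_self a _)
    rw [mem_union, not_or] at ha
    rw [abs_le] at h hfa
    by_cases hsign : 0 ≤ (∑ x ∈ s₁, f x - ∑ x ∈ s₂, f x) ↔ 0 ≤ f a
    · refine ⟨s₁, insert a s₂, union_insert .., disjoint_insert_right.2 ⟨ha.1, hd⟩, ?_⟩
      rw [sum_insert ha.2, abs_le]
      omega
    · refine ⟨insert a s₁, s₂, insert_union .., disjoint_insert_left.2 ⟨ha.2, hd⟩, ?_⟩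
      rw [sum_insert ha.1, abs_le]
      omega

section Arcs

variable {V : Type} [Fintype V] [DecidableEq V] (A : V → V → Prop) [DecidableRel A]

theorem dArcs_eq_sum_left (S T : Finset V) :
    dArcs A S T = ∑ x ∈ S, #{y ∈ T | A x y} := by
  simp only [dArcs, card_filter, sum_product]

theorem dArcs_eq_sum_right (S T : Finset V) :
    dArcs A S T = ∑ y ∈ T, #{x ∈ S | A x y} := by
  simp only [dArcs, card_filter, sum_product_right]

theorem gap_eq_sum_sub_sum (X₁ X₂ Y : Finset V) :
    gap A X₁ X₂ Y = ∑ x ∈ X₁, ((#{y ∈ Y | A x y} : ℤ) - #{y ∈ Y | A y x}) -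
      ∑ x ∈ X₂, ((#{y ∈ Y | A x y} : ℤ) - #{y ∈ Y | A y x}) := by
  rw [gap, dArcs_eq_sum_left A X₁, dArcs_eq_sum_left A X₂, dArcs_eq_sum_right A Y X₁,
    dArcs_eq_sum_right A Y X₂]
  push_cast [sum_sub_distrib]
  ring

end Arcs

/-- Lemma 2.3(1) (Hou–Wu–Yan): a gap-minimizing partition has `|θ(X₁,X₂)| ≤ |Y|`. -/
theorem stmt3 {V : Type} [Fintype V] [DecidableEq V] (A : V → V → Prop) [DecidableRel A]
    (hirr : ∀ v, ¬ A v v)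
    (X Y : Finset V) (hXY : X ∪ Y = Finset.univ) (hdXY : Disjoint X Y)
    (heX : dArcs A X X = 0)
    (X₁ X₂ : Finset V) (hX : X₁ ∪ X₂ = X) (hdisj : Disjoint X₁ X₂)
    (hmin : ∀ S₁ S₂ : Finset V, S₁ ∪ S₂ = X → Disjoint S₁ S₂ →
      |gap A X₁ X₂ Y| ≤ |gap A S₁ S₂ Y|) :
    |gap A X₁ X₂ Y| ≤ (Y.card : ℤ) := by
  obtain ⟨S₁, S₂, hS, hd, h⟩ := exists_partition_abs_sum_sub_sum_le
    (fun x => (#{y ∈ Y | A x y} : ℤ) - #{y ∈ Y | A y x}) (Int.natCast_nonneg #Y) X fun x _ => by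
      have hout := card_filter_le Y (A x ·)
      have hin := card_filter_le Y (A · x)
      rw [abs_le]
      omega
  exact (hmin S₁ S₂ hS hd).trans (by rwa [gap_eq_sum_sub_sum])
end
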